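/- arXiv:1408.4057 — 3 statements merged into one kernel-verified Lean document; each statement's English description precedes it below -/
import Mathlib

section
/- (Lemma 4.1.) Let d ≥ 1 and β, γ > 0. There exist L > 0, κ = (κ₁,κ₂) ∈ (0,∞)² and a compactly supported probability density in 𝒫^iso_d(β,L) satisfying the κ-margin condition with exponent γ if and only if γβ ≤ 1. -/
open MeasureTheory Real
open scoped ENNReal BigOperators

noncomputable section

/-- `EVec d` is `ℝ^d` with the Euclidean norm. -/
abbrev EVec (d : ℕ) := EuclideanSpace ℝ (Fin d)

/-- The largest integer strictly smaller than `b` (for `b > 0`). -/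
def hfl (b : ℝ) : ℕ := ⌈b⌉₊ - 1

/-- The multivariate Taylor polynomial of `f` at `y` of degree `l`, evaluated at `x`. -/
def taylorPolyMulti {d : ℕ} (f : EVec d → ℝ) (l : ℕ) (y x : EVec d) : ℝ :=
  ∑ k ∈ Finset.range (l + 1),
    (Nat.factorial k : ℝ)⁻¹ * iteratedFDeriv ℝ k f y (fun _ => x - y)

/-- The isotropic Hölder condition with exponent `β` and constant `L` (Euclidean norm):
for `β ≤ 1` a plain Hölder condition; for `β > 1`, `f` is `⌊β⌋` times continuously
differentiable with Taylor remainder of degree `⌊β⌋` bounded by `L ‖x - y‖₂^β`. -/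
def HolderIso (d : ℕ) (β L : ℝ) (f : EVec d → ℝ) : Prop :=
  if β ≤ 1 then ∀ x y : EVec d, |f x - f y| ≤ L * dist x y ^ β
  else ContDiff ℝ (hfl β) f ∧
    ∀ x y : EVec d, |f x - taylorPolyMulti f (hfl β) y x| ≤ L * dist x y ^ β

/-- `p` is a probability density on `ℝ^d` (Lebesgue measure on Euclidean space). -/
def IsProbDensityE (d : ℕ) (p : EVec d → ℝ) : Prop :=
  Measurable p ∧ (∀ x, 0 ≤ p x) ∧ ∫ x, p x = 1

/-- The `κ`-margin condition with exponent `γ`: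
`λ^d(closure{x : 0 < p(x) ≤ ε}) ≤ κ₂ ε^γ` for all `0 < ε ≤ κ₁`. -/
def MarginCond (d : ℕ) (γ κ1 κ2 : ℝ) (p : EVec d → ℝ) : Prop :=
  ∀ ε : ℝ, 0 < ε → ε ≤ κ1 →
    volume (closure {x | 0 < p x ∧ p x ≤ ε}) ≤ ENNReal.ofReal (κ2 * ε ^ γ)

/-- The support `Γ_p = closure{p > 0}` of a density. -/
def supportOf {d : ℕ} (p : EVec d → ℝ) : Set (EVec d) := closure {x | 0 < p x}

/-- The `ξ`-complexity condition to the exponent `μ`: for every `0 < ε ≤ ξ₁` there is a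
disjoint decomposition `A = A₁ ∪ A₂` with
`λ^d(A₁^ε ∖ A₁) ∨ λ^d(A₂) ≤ ξ₂ ε^μ` (`A₁^ε` the closed outer `ε`-parallel set). -/
def ComplexityCond (d : ℕ) (ξ1 ξ2 μ : ℝ) (A : Set (EVec d)) : Prop :=
  ∀ ε : ℝ, 0 < ε → ε ≤ ξ1 →
    ∃ A1 A2 : Set (EVec d), A = A1 ∪ A2 ∧ Disjoint A1 A2 ∧
      volume (Metric.cthickening ε A1 \ A1) ≤ ENNReal.ofReal (ξ2 * ε ^ μ) ∧
      volume A2 ≤ ENNReal.ofReal (ξ2 * ε ^ μ)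

/-- The class `𝒫^iso_d(β, L, γ, κ, ξ)`: isotropic `(β,L)`-Hölder densities satisfying the
`κ`-margin condition with exponent `γ`, whose support satisfies the `ξ`-complexity
condition to the exponent `μ = γβ`. -/
def PIsoFull (d : ℕ) (β L γ κ1 κ2 ξ1 ξ2 : ℝ) (p : EVec d → ℝ) : Prop :=
  IsProbDensityE d p ∧ HolderIso d β L p ∧ MarginCond d γ κ1 κ2 p ∧
    ComplexityCond d ξ1 ξ2 (γ * β) (supportOf p)

/-- The joint law of an i.i.d. sample of size `n` from the density `p`. -/
def jointMeasureE (d n : ℕ) (p : EVec d → ℝ) : Measure (Fin n → EVec d) :=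
  Measure.pi fun _ => volume.withDensity fun x => ENNReal.ofReal (p x)

end

/-!
Necessity of `γ * β ≤ 1`. Off the support of a density `p` its Taylor polynomials vanish, so
Hölder smoothness bounds `p` by `L * δ ^ β` on the inner boundary layer of width `δ` of the support,
and the margin condition makes the volume of this layer `O(δ ^ (γ * β))`, which is `o(δ)` if
`1 < γ * β`. A translation by `w` is the composition of `n` translations by `w / n`, each of which
moves points across the boundary only through a layer of width of order `1 / n`. Hence the support
is translation invariant up to null sets, and ergodicity of the translations makes it null or
conull, whereas it has positive and finite volume.

Sufficiency. The normalised function `(1 - ‖x‖²)₊ ^ β` is `β`-smooth, because differentiating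
the product of `(1 - ‖x‖²)₊ ^ s` with a smooth map gives a product of `(1 - ‖x‖²)₊ ^ (s - 1)` with
a smooth map. It is positive and at most `ε` only in a shell of width `O(ε ^ (1 / β))` at the unit
sphere, whose volume is `O(ε ^ (1 / β))`, hence `O(ε ^ γ)`.
-/

open Filter Metric
open scoped Topology NNReal

section BoundaryLayer

/-- The erosion of `s` by radius `δ`: the points whose open `δ`-ball lies in `s`. Its complement
in `s` is the inner boundary layer of width `δ`, which the margin condition controls. -/
def erosion {X : Type*} [PseudoMetricSpace X] (δ : ℝ) (s : Set X) : Set X :=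
  {x | ball x δ ⊆ s}

lemma erosion_subset {X : Type*} [PseudoMetricSpace X] {δ : ℝ} (hδ : 0 < δ) (s : Set X) :
    erosion δ s ⊆ s :=
  fun _ hx => hx (mem_ball_self hδ)

lemma measure_preimage_nsmul_add_sdiff_le {G : Type*} [AddGroup G] [MeasurableSpace G]
    [MeasurableAdd G] (μ : Measure G) [μ.IsAddLeftInvariant] (s : Set G) (v : G) (n : ℕ) :
    μ ((n • v + ·) ⁻¹' s \ s) ≤ n * μ ((v + ·) ⁻¹' s \ s) := by
  induction n with
  | zero => simp
  | succ n ih =>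
    have hcover : ((n + 1) • v + ·) ⁻¹' s \ s ⊆
        (n • v + ·) ⁻¹' ((v + ·) ⁻¹' s \ s) ∪ ((n • v + ·) ⁻¹' s \ s) := by
      rintro x ⟨hx, hxs⟩
      rw [Set.mem_preimage, succ_nsmul', add_assoc] at hx
      by_cases h : n • v + x ∈ s
      exacts [Or.inr ⟨h, hxs⟩, Or.inl ⟨hx, h⟩]
    calc μ (((n + 1) • v + ·) ⁻¹' s \ s)
        ≤ μ ((v + ·) ⁻¹' s \ s) + μ ((n • v + ·) ⁻¹' s \ s) := by
          rw [← measure_preimage_add μ (n • v) ((v + ·) ⁻¹' s \ s)]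
          exact (measure_mono hcover).trans (measure_union_le _ _)
      _ ≤ μ ((v + ·) ⁻¹' s \ s) + n * μ ((v + ·) ⁻¹' s \ s) := by gcongr
      _ = (n + 1 : ℕ) * μ ((v + ·) ⁻¹' s \ s) := by push_cast; ring

variable {E : Type*} [NormedAddCommGroup E] [MeasurableSpace E] [BorelSpace E]
  {μ : Measure E} [μ.IsAddLeftInvariant]

lemma measure_preimage_nsmul_add_sdiff_le_sdiff_erosion (s : Set E) {v : E} {δ : ℝ}
    (hv : ‖v‖ < δ) (n : ℕ) :
    μ ((n • v + ·) ⁻¹' s \ s) ≤ (n + 1) * μ (s \ erosion δ s) := by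
  have hδ : 0 < δ := (norm_nonneg v).trans_lt hv
  have hcover : (n • v + ·) ⁻¹' s \ s ⊆ (n • v + ·) ⁻¹' (s \ erosion δ s) ∪
      ((n • v + ·) ⁻¹' erosion δ s \ erosion δ s) := by
    rintro x ⟨hx, hxs⟩
    by_cases h : n • v + x ∈ erosion δ s
    exacts [Or.inr ⟨h, fun hx' => hxs (erosion_subset hδ s hx')⟩, Or.inl ⟨hx, h⟩]
  have hstep : (v + ·) ⁻¹' erosion δ s \ erosion δ s ⊆ s \ erosion δ s :=
    Set.sdiff_subset_sdiff_left fun x hx => hx (by simpa [dist_eq_norm] using hv)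
  calc μ ((n • v + ·) ⁻¹' s \ s)
      ≤ μ (s \ erosion δ s) + μ ((n • v + ·) ⁻¹' erosion δ s \ erosion δ s) := by
        rw [← measure_preimage_add μ (n • v) (s \ erosion δ s)]
        exact (measure_mono hcover).trans (measure_union_le _ _)
    _ ≤ μ (s \ erosion δ s) + n * μ (s \ erosion δ s) := by
        gcongr
        exact (measure_preimage_nsmul_add_sdiff_le μ _ v n).trans (by gcongr)
    _ = (n + 1) * μ (s \ erosion δ s) := by ring

variable [NormedSpace ℝ E] {s : Set E}

lemma measure_preimage_add_sdiff_eq_zero_of_tendsto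
    (h : Tendsto (fun δ => μ (s \ erosion δ s) / ENNReal.ofReal δ) (𝓝[>] 0) (𝓝 0)) (w : E) :
    μ ((w + ·) ⁻¹' s \ s) = 0 := by
  set c : ℝ := ‖w‖ + 1
  have hc : 0 < c := by positivity
  have hδ : Tendsto (fun n : ℕ => c / n) atTop (𝓝[>] 0) :=
    tendsto_nhdsWithin_iff.mpr ⟨tendsto_const_div_atTop_nhds_zero_nat c,
      (eventually_gt_atTop 0).mono fun n hn => Set.mem_Ioi.mpr (by positivity)⟩
  have hlim := ENNReal.Tendsto.const_mul (h.comp hδ) (a := ENNReal.ofReal (2 * c))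
    (Or.inr ENNReal.ofReal_ne_top)
  rw [mul_zero] at hlim
  refine nonpos_iff_eq_zero.mp (ge_of_tendsto hlim ?_)
  filter_upwards [eventually_ge_atTop 1] with n hn
  have hn0 : (0 : ℝ) < n := by exact_mod_cast hn
  have hw : n • ((n : ℝ)⁻¹ • w) = w := by
    rw [← Nat.cast_smul_eq_nsmul ℝ, smul_inv_smul₀ hn0.ne']
  have hnorm : ‖(n : ℝ)⁻¹ • w‖ < c / n := by
    rw [norm_smul, norm_inv, Real.norm_of_nonneg hn0.le, inv_mul_eq_div]
    gcongr
    exact lt_add_one _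
  have hcount : (n + 1 : ℝ≥0∞) ≤ ENNReal.ofReal (2 * c) / ENNReal.ofReal (c / n) := by
    rw [← ENNReal.ofReal_div_of_pos (by positivity), mul_div_assoc, div_div_cancel₀ hc.ne',
      two_mul, ENNReal.ofReal_add hn0.le hn0.le, ENNReal.ofReal_natCast]
    gcongr
    exact_mod_cast hn
  calc μ ((w + ·) ⁻¹' s \ s)
      ≤ (n + 1) * μ (s \ erosion (c / n) s) := by
        simpa only [hw] using measure_preimage_nsmul_add_sdiff_le_sdiff_erosion (μ := μ) s hnorm n
    _ ≤ ENNReal.ofReal (2 * c) / ENNReal.ofReal (c / n) * μ (s \ erosion (c / n) s) := by gcongr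
    _ = ENNReal.ofReal (2 * c) * (μ (s \ erosion (c / n) s) / ENNReal.ofReal (c / n)) := by
        rw [ENNReal.mul_comm_div]

lemma measure_eq_zero_of_tendsto_sdiff_erosion [SecondCountableTopology E] [SFinite μ]
    (huniv : μ Set.univ = ∞) (hs : MeasurableSet s) (hfin : μ s ≠ ∞)
    (h : Tendsto (fun δ => μ (s \ erosion δ s) / ENNReal.ofReal δ) (𝓝[>] 0) (𝓝 0)) :
    μ s = 0 := by
  have hinv : ∀ w : E, (w +ᵥ ·) ⁻¹' s =ᵐ[μ] s := by
    intro w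
    refine ae_eq_set.mpr ⟨measure_preimage_add_sdiff_eq_zero_of_tendsto h w, ?_⟩
    rw [← measure_preimage_add_sdiff_eq_zero_of_tendsto h (-w),
      ← measure_preimage_add μ w ((-w + ·) ⁻¹' s \ s)]
    simp [Set.preimage_sdiff, Set.preimage_preimage]
  rcases eventuallyConst_set'.mp
    (aeconst_of_forall_preimage_vadd_ae_eq E hs.nullMeasurableSet hinv) with hnull | hfull
  · exact ae_eq_empty.mp hnull
  · exact absurd ((measure_congr hfull).trans huniv) hfin

end BoundaryLayer

lemma holderWith_of_dist_le {X Y : Type*} [PseudoMetricSpace X] [PseudoMetricSpace Y]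
    {f : X → Y} {C r : ℝ≥0} (h : ∀ x y, dist (f x) (f y) ≤ C * dist x y ^ (r : ℝ)) :
    HolderWith C r f := by
  intro x y
  rw [edist_nndist, edist_nndist, ← ENNReal.coe_rpow_of_nonneg _ r.coe_nonneg]
  exact_mod_cast h x y

section Taylor

variable {E F : Type*} [NormedAddCommGroup E] [NormedSpace ℝ E]
  [NormedAddCommGroup F] [NormedSpace ℝ F]

/-- The Taylor polynomial of `f` at `y` of degree `l`, evaluated at `x`: the analogue of
`taylorPolyMulti` for maps between normed spaces, needed since the derivative of a real function
is vector-valued. -/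
noncomputable def taylorSum (f : E → F) (l : ℕ) (y x : E) : F :=
  ∑ k ∈ Finset.range (l + 1), (k.factorial : ℝ)⁻¹ • iteratedFDeriv ℝ k f y fun _ => x - y

/-- `f` is `C^l` with Taylor remainders of degree `l` bounded by a multiple of the `s`-th power of
the distance. For `l < s ≤ l + 1` this is the Hölder class of exponent `s`. -/
def IsHolderSmooth (l : ℕ) (s : ℝ) (f : E → F) : Prop :=
  ContDiff ℝ l f ∧ ∃ C ≥ 0, ∀ x y, ‖f x - taylorSum f l y x‖ ≤ C * dist x y ^ s

@[simp]
lemma taylorSum_zero (f : E → F) (y x : E) : taylorSum f 0 y x = f y := by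
  simp [taylorSum]

lemma taylorSum_eq_zero_of_notMem_tsupport {f : E → F} {y : E} (hy : y ∉ tsupport f) (l : ℕ)
    (x : E) : taylorSum f l y x = 0 := by
  refine Finset.sum_eq_zero fun k _ => ?_
  have hk : iteratedFDeriv ℝ k f y = 0 :=
    Function.notMem_support.mp fun h => hy (support_iteratedFDeriv_subset k h)
  simp only [hk, zero_apply, smul_zero]

lemma taylorSum_succ_add_smul (f : E → F) (l : ℕ) (y v : E) (t : ℝ) :
    taylorSum f (l + 1) y (y + t • v) = f y + ∑ k ∈ Finset.range (l + 1),
      t ^ (k + 1) • ((k + 1).factorial : ℝ)⁻¹ •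
        iteratedFDeriv ℝ k (fderiv ℝ f) y (fun _ => v) v := by
  rw [taylorSum, Finset.sum_range_succ', add_comm]
  congr 1
  · simp
  · refine Finset.sum_congr rfl fun k _ => ?_
    rw [add_sub_cancel_left, ContinuousMultilinearMap.map_smul_univ _ (fun _ => t) fun _ => v,
      iteratedFDeriv_succ_apply_right, smul_comm]
    simp [Fin.init_def]

lemma taylorSum_self (f : E → F) (l : ℕ) (y : E) : taylorSum f l y y = f y := by
  cases l with
  | zero => simp
  | succ l => simpa using taylorSum_succ_add_smul f l y 0 0

lemma hasDerivAt_taylorSum_succ_add_smul (f : E → F) (l : ℕ) (y v : E) (t : ℝ) :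
    HasDerivAt (fun t : ℝ => taylorSum f (l + 1) y (y + t • v))
      (taylorSum (fderiv ℝ f) l y (y + t • v) v) t := by
  have hfact (k : ℕ) : (k.factorial : ℝ)⁻¹ * t ^ k =
      (k + 1 : ℕ) * t ^ k * ((k + 1).factorial : ℝ)⁻¹ := by
    rw [Nat.factorial_succ, Nat.cast_mul]
    field_simp
  have hval : taylorSum (fderiv ℝ f) l y (y + t • v) v = ∑ k ∈ Finset.range (l + 1),
      ((k + 1 : ℕ) * t ^ k) • ((k + 1).factorial : ℝ)⁻¹ •
        iteratedFDeriv ℝ k (fderiv ℝ f) y (fun _ => v) v := by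
    rw [taylorSum, sum_apply]
    refine Finset.sum_congr rfl fun k _ => ?_
    rw [add_sub_cancel_left, ContinuousMultilinearMap.map_smul_univ _ (fun _ => t) fun _ => v]
    simp only [Finset.prod_const, Finset.card_univ, Fintype.card_fin, smul_apply, smul_smul, hfact]
  simp only [taylorSum_succ_add_smul, hval]
  refine HasDerivAt.const_add _ (HasDerivAt.fun_sum fun k _ => ?_)
  simpa using (hasDerivAt_pow (k + 1) t).smul_const _

/-- The remainder of degree `l + 1` of `f` on a segment has the remainder of degree `l` of
`fderiv ℝ f` as its derivative, so the mean value inequality applies. -/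
lemma norm_sub_taylorSum_succ_le {f : E → F} (hf : Differentiable ℝ f) {l : ℕ} {C s : ℝ}
    (hC : 0 ≤ C) (hs : 0 ≤ s)
    (h : ∀ x y, ‖fderiv ℝ f x - taylorSum (fderiv ℝ f) l y x‖ ≤ C * dist x y ^ s) (x y : E) :
    ‖f x - taylorSum f (l + 1) y x‖ ≤ C * dist x y ^ (s + 1) := by
  set v := x - y with hv
  have hvn : ‖v‖ = dist x y := (dist_eq_norm x y).symm
  have hderiv (t : ℝ) : HasDerivAt
      (fun t : ℝ => f (y + t • v) - taylorSum f (l + 1) y (y + t • v))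
      ((fderiv ℝ f (y + t • v) - taylorSum (fderiv ℝ f) l y (y + t • v)) v) t := by
    have hline : HasDerivAt (fun t : ℝ => y + t • v) v t := by
      simpa using ((hasDerivAt_id t).smul_const v).const_add y
    exact ((hf _).hasFDerivAt.comp_hasDerivAt t hline).sub
      (hasDerivAt_taylorSum_succ_add_smul f l y v t)
  have hbound : ∀ t ∈ Set.Ico (0 : ℝ) 1,
      ‖(fderiv ℝ f (y + t • v) - taylorSum (fderiv ℝ f) l y (y + t • v)) v‖ ≤
        C * dist x y ^ (s + 1) := by
    intro t ht
    have hdist : dist (y + t • v) y ≤ dist x y := by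
      rw [dist_self_add_left, norm_smul, Real.norm_of_nonneg ht.1, hvn]
      exact mul_le_of_le_one_left dist_nonneg ht.2.le
    calc ‖(fderiv ℝ f (y + t • v) - taylorSum (fderiv ℝ f) l y (y + t • v)) v‖
        ≤ C * dist (y + t • v) y ^ s * ‖v‖ :=
          ContinuousLinearMap.le_of_opNorm_le _ (h _ _) v
      _ ≤ C * dist x y ^ s * dist x y := by rw [hvn]; gcongr
      _ = C * dist x y ^ (s + 1) := by
          rw [mul_assoc, ← Real.rpow_add_one' dist_nonneg (by positivity)]
  have hmean := norm_image_sub_le_of_norm_deriv_le_segment_01'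
    (fun t _ => (hderiv t).hasDerivWithinAt) hbound
  simpa [taylorSum_self, hv] using hmean

lemma IsHolderSmooth.of_hasFDerivAt {f : E → F} {f' : E → E →L[ℝ] F} {l : ℕ} {s : ℝ}
    (hs : 0 ≤ s) (hf : ∀ x, HasFDerivAt f (f' x) x) (hf' : IsHolderSmooth l s f') :
    IsHolderSmooth (l + 1) (s + 1) f := by
  obtain ⟨hcont, C, hC, hrem⟩ := hf'
  have hfderiv : fderiv ℝ f = f' := funext fun x => (hf x).fderiv
  refine ⟨by exact_mod_cast contDiff_succ_iff_hasFDerivAt.mpr ⟨f', hcont, hf⟩, C, hC, ?_⟩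
  exact norm_sub_taylorSum_succ_le (fun x => (hf x).differentiableAt) hC hs (by rwa [hfderiv])

lemma isHolderSmooth_of_memHolder {r : ℝ≥0} (hr : 0 < r) {f : E → F} (hf : MemHolder r f) :
    IsHolderSmooth 0 r f := by
  obtain ⟨C, hC⟩ := hf
  refine ⟨contDiff_zero.mpr (hC.continuous hr), C, C.coe_nonneg, fun x y => ?_⟩
  simpa [dist_eq_norm] using hC.dist_le x y

end Taylor

section Necessity

variable {d : ℕ} {β γ L κ1 κ2 : ℝ} {p : EVec d → ℝ}

lemma HolderIso.continuous (h : HolderIso d β L p) (hβ : 0 < β) (hL : 0 ≤ L) :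
    Continuous p := by
  unfold HolderIso at h
  split_ifs at h
  · lift β to ℝ≥0 using hβ.le
    lift L to ℝ≥0 using hL
    exact (holderWith_of_dist_le h).continuous (by exact_mod_cast hβ)
  · exact h.1.continuous

lemma HolderIso.le_mul_dist_rpow_of_notMem_tsupport (h : HolderIso d β L p) {y : EVec d}
    (hy : y ∉ tsupport p) (x : EVec d) : p x ≤ L * dist x y ^ β := by
  unfold HolderIso at h
  split_ifs at h
  · simpa [image_eq_zero_of_notMem_tsupport hy] using (le_abs_self _).trans (h x y)
  · have hT : taylorPolyMulti p (hfl β) y x = 0 := taylorSum_eq_zero_of_notMem_tsupport hy _ x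
    simpa [hT] using (le_abs_self _).trans (h.2 x y)

lemma HolderIso.tsupport_sdiff_erosion_subset (h : HolderIso d β L p) (hβ : 0 ≤ β) (hL : 0 ≤ L)
    (hp : ∀ x, 0 ≤ p x) (δ : ℝ) :
    tsupport p \ erosion δ (tsupport p) ⊆ closure {x | 0 < p x ∧ p x ≤ L * δ ^ β} := by
  rintro x ⟨hx, hxδ⟩
  obtain ⟨y, hyx, hy⟩ := Set.not_subset.mp hxδ
  refine closure_mono ?_
    (isOpen_ball.inter_closure ⟨mem_ball'.mp hyx, hx⟩ : x ∈ closure (ball y δ ∩ _))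
  rintro z ⟨hzy, hz⟩
  refine ⟨(hp z).lt_of_ne' hz, (h.le_mul_dist_rpow_of_notMem_tsupport hy z).trans ?_⟩
  gcongr
  exact (mem_ball.mp hzy).le

lemma IsProbDensityE.volume_tsupport_ne_zero (h : IsProbDensityE d p) :
    volume (tsupport p) ≠ 0 := by
  intro hnull
  have hae : p =ᵐ[volume] 0 := (measure_eq_zero_iff_ae_notMem.mp hnull).mono
    fun _ => image_eq_zero_of_notMem_tsupport
  exact zero_ne_one ((integral_eq_zero_of_ae hae).symm.trans h.2.2)

/-- Markov's inequality bounds the part of the support where `p` is large, the margin condition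
the part where it is small. -/
lemma MarginCond.volume_tsupport_ne_top (h : MarginCond d γ κ1 κ2 p) (hp : IsProbDensityE d p)
    (hcont : Continuous p) (hκ1 : 0 < κ1) : volume (tsupport p) ≠ ∞ := by
  have hcover : tsupport p ⊆ closure {x | 0 < p x ∧ p x ≤ κ1} ∪ {x | κ1 ≤ ‖p x‖} := by
    refine closure_minimal (fun x hx => ?_)
      (isClosed_closure.union (isClosed_le continuous_const hcont.norm))
    rcases le_or_gt (p x) κ1 with hle | hgt
    · exact Or.inl (subset_closure ⟨(hp.2.1 x).lt_of_ne' hx, hle⟩)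
    · exact Or.inr (hgt.le.trans (le_abs_self _))
  have hint : Integrable p := .of_integral_ne_zero (by rw [hp.2.2]; exact one_ne_zero)
  exact ((measure_mono hcover).trans (measure_union_le _ _)).trans_lt (ENNReal.add_lt_top.mpr
    ⟨(h κ1 hκ1 le_rfl).trans_lt ENNReal.ofReal_lt_top, hint.measure_norm_ge_lt_top hκ1⟩) |>.ne

lemma MarginCond.tendsto_volume_sdiff_erosion (hM : MarginCond d γ κ1 κ2 p)
    (hH : HolderIso d β L p) (hp : ∀ x, 0 ≤ p x) (hβ : 0 < β) (hL : 0 < L) (hκ1 : 0 < κ1)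
    (hγβ : 1 < γ * β) :
    Tendsto (fun δ => volume (tsupport p \ erosion δ (tsupport p)) / ENNReal.ofReal δ)
      (𝓝[>] 0) (𝓝 0) := by
  have htendsto (C s : ℝ) (hs : 0 < s) : Tendsto (fun δ : ℝ => C * δ ^ s) (𝓝[>] 0) (𝓝 0) := by
    refine ((Real.continuous_rpow_const hs.le).const_mul C).tendsto' 0 0 ?_ |>.mono_left
      nhdsWithin_le_nhds
    rw [Real.zero_rpow hs.ne', mul_zero]
  have hlim := ENNReal.tendsto_ofReal (htendsto (κ2 * L ^ γ) (γ * β - 1) (sub_pos.mpr hγβ))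
  rw [ENNReal.ofReal_zero] at hlim
  refine tendsto_of_tendsto_of_tendsto_of_le_of_le' tendsto_const_nhds hlim
    (Eventually.of_forall fun _ => zero_le) ?_
  filter_upwards [self_mem_nhdsWithin, (htendsto L β hβ).eventually_le_const hκ1] with δ hδ hδκ
  rw [Set.mem_Ioi] at hδ
  have hrate : κ2 * L ^ γ * δ ^ (γ * β - 1) = κ2 * (L * δ ^ β) ^ γ / δ := by
    rw [Real.mul_rpow hL.le (by positivity), ← Real.rpow_mul hδ.le, mul_comm β γ,
      Real.rpow_sub_one hδ.ne']
    ring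
  rw [hrate, ENNReal.ofReal_div_of_pos hδ]
  gcongr
  exact (measure_mono (hH.tsupport_sdiff_erosion_subset hβ.le hL.le hp δ)).trans
    (hM _ (by positivity) hδκ)

theorem MarginCond.mul_le_one (hM : MarginCond d γ κ1 κ2 p) (hH : HolderIso d β L p)
    (hp : IsProbDensityE d p) (hd : 1 ≤ d) (hβ : 0 < β) (hL : 0 < L) (hκ1 : 0 < κ1) :
    γ * β ≤ 1 := by
  by_contra! hγβ
  have : Nonempty (Fin d) := ⟨⟨0, hd⟩⟩
  have : NoncompactSpace (EVec d) := NormedSpace.noncompactSpace ℝ _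
  exact hp.volume_tsupport_ne_zero (measure_eq_zero_of_tendsto_sdiff_erosion
    (measure_univ_of_isAddLeftInvariant volume) (isClosed_tsupport p).measurableSet
    (hM.volume_tsupport_ne_top hp (hH.continuous hβ hL.le) hκ1)
    (hM.tendsto_volume_sdiff_erosion hH hp.2.1 hβ hL hκ1 hγβ))

end Necessity

section Holder

lemma memHolder_smul_of_bounded {X F : Type*} [MetricSpace X] [NormedAddCommGroup F]
    [NormedSpace ℝ F] {r : ℝ≥0} {f : X → ℝ} {g : X → F} (hf : MemHolder r f)
    (hg : MemHolder r g) {A B : ℝ} (hfA : ∀ x, ‖f x‖ ≤ A) (hgB : ∀ x, ‖g x‖ ≤ B) :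
    MemHolder r fun x => f x • g x := by
  obtain ⟨Cf, hCf⟩ := hf
  obtain ⟨Cg, hCg⟩ := hg
  refine ⟨A.toNNReal * Cg + Cf * B.toNNReal, holderWith_of_dist_le fun x y => ?_⟩
  calc dist (f x • g x) (f y • g y)
      ≤ dist (f x • g x) (f x • g y) + dist (f x • g y) (f y • g y) := dist_triangle _ _ _
    _ ≤ ‖f x‖ * dist (g x) (g y) + dist (f x) (f y) * ‖g y‖ := by
        simp only [dist_eq_norm, ← smul_sub, ← sub_smul, norm_smul, le_refl]
    _ ≤ A.toNNReal * (Cg * dist x y ^ (r : ℝ)) +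
          Cf * dist x y ^ (r : ℝ) * B.toNNReal := by
        gcongr
        exacts [(hfA x).trans (Real.le_coe_toNNReal A), hCg.dist_le x y, hCf.dist_le x y,
          (hgB y).trans (Real.le_coe_toNNReal B)]
    _ = ↑(A.toNNReal * Cg + Cf * B.toNNReal) * dist x y ^ (r : ℝ) := by push_cast; ring

lemma memHolder_of_contDiff_of_hasCompactSupport {E F : Type*} [NormedAddCommGroup E]
    [NormedSpace ℝ E] [NormedAddCommGroup F] [NormedSpace ℝ F] {g : E → F}
    (hg : ContDiff ℝ 1 g) (hgc : HasCompactSupport g) {r : ℝ≥0} (hr : r ≤ 1) :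
    MemHolder r g := by
  obtain ⟨C, hC⟩ := hg.lipschitzWith_of_hasCompactSupport hgc one_ne_zero
  obtain ⟨B, hB⟩ := hgc.exists_bound_of_continuous hg.continuous
  have hbdd : HolderWith (2 * B.toNNReal) 0 g := holderWith_of_dist_le fun x y => by
    have hle (x : E) : ‖g x‖ ≤ B.toNNReal := (hB x).trans (Real.le_coe_toNNReal B)
    simpa [two_mul] using (dist_le_norm_add_norm (g x) (g y)).trans (add_le_add (hle x) (hle y))
  exact hbdd.memHolder.memHolder_of_le_of_le (holderWith_one.mpr hC).memHolder zero_le hr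

end Holder

section Bump

lemma abs_rpow_sub_rpow_le {s a b : ℝ} (ha : 0 ≤ a) (hb : 0 ≤ b) (hs : 0 ≤ s) (hs1 : s ≤ 1) :
    |a ^ s - b ^ s| ≤ |a - b| ^ s := by
  wlog hab : b ≤ a generalizing a b
  · rw [abs_sub_comm, abs_sub_comm a b]
    exact this hb ha (le_of_not_ge hab)
  rw [abs_of_nonneg (sub_nonneg.mpr (Real.rpow_le_rpow hb hab hs)),
    abs_of_nonneg (sub_nonneg.mpr hab), sub_le_iff_le_add']
  simpa only [add_sub_cancel] using Real.rpow_add_le_add_rpow hb (sub_nonneg.mpr hab) hs hs1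

lemma hasDerivAt_max_zero_rpow {s : ℝ} (hs : 1 < s) (t : ℝ) :
    HasDerivAt (fun t : ℝ => max t 0 ^ s) (s * max t 0 ^ (s - 1)) t := by
  have hcont {r : ℝ} (hr : 0 < r) : Continuous fun t : ℝ => max t 0 ^ r :=
    (continuous_id.max continuous_const).rpow_const fun _ => Or.inr hr.le
  refine hasDerivAt_of_hasDerivAt_of_ne' (x := 0) (fun u hu => ?_)
    (hcont (by positivity)).continuousAt
    ((hcont (sub_pos.mpr hs)).const_mul s).continuousAt t
  rcases hu.lt_or_gt with hneg | hpos
  · rw [max_eq_right hneg.le, Real.zero_rpow (sub_pos.mpr hs).ne', mul_zero]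
    refine (hasDerivAt_const u (0 : ℝ)).congr_of_eventuallyEq ?_
    filter_upwards [gt_mem_nhds hneg] with v hv
    rw [max_eq_right hv.le, Real.zero_rpow (by positivity)]
  · rw [max_eq_left hpos.le]
    refine (Real.hasDerivAt_rpow_const (Or.inr hs.le)).congr_of_eventuallyEq ?_
    filter_upwards [lt_mem_nhds hpos] with v hv
    rw [max_eq_left hv.le]

universe u

variable {E : Type u} [NormedAddCommGroup E]

/-- The function `(1 - ‖x‖²)₊ ^ s`, supported in the closed unit ball: it has Hölder smoothness `s`
and vanishes at the unit sphere only like the `s`-th power of the distance to it. -/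
noncomputable def ballBump (s : ℝ) (x : E) : ℝ := max (1 - ‖x‖ ^ 2) 0 ^ s

lemma ballBump_nonneg (s : ℝ) (x : E) : 0 ≤ ballBump s x :=
  Real.rpow_nonneg (le_max_right _ _) _

lemma ballBump_le_one {s : ℝ} (hs : 0 ≤ s) (x : E) : ballBump s x ≤ 1 :=
  Real.rpow_le_one (le_max_right _ _) (max_le (sub_le_self _ (sq_nonneg _)) zero_le_one) hs

lemma continuous_ballBump {s : ℝ} (hs : 0 ≤ s) : Continuous (ballBump s : E → ℝ) :=
  Continuous.rpow_const (by fun_prop) fun _ => Or.inr hs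

lemma ballBump_of_one_le_norm {s : ℝ} (hs : s ≠ 0) {x : E} (hx : 1 ≤ ‖x‖) :
    ballBump s x = 0 := by
  have hsq : 1 - ‖x‖ ^ 2 ≤ 0 := sub_nonpos.mpr (one_le_pow₀ hx)
  rw [ballBump, max_eq_right hsq, Real.zero_rpow hs]

lemma ballBump_of_norm_le_one {s : ℝ} {x : E} (hx : ‖x‖ ≤ 1) :
    ballBump s x = (1 - ‖x‖ ^ 2) ^ s := by
  rw [ballBump, max_eq_left (sub_nonneg.mpr (pow_le_one₀ (norm_nonneg x) hx))]

lemma ballBump_eq_mul {s : ℝ} (hs : 1 < s) (x : E) :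
    ballBump s x = ballBump (s - 1) x * (1 - ‖x‖ ^ 2) := by
  rcases le_or_gt 1 ‖x‖ with hx | hx
  · rw [ballBump_of_one_le_norm (by positivity) hx,
      ballBump_of_one_le_norm (sub_pos.mpr hs).ne' hx, zero_mul]
  · have hpos : 0 < 1 - ‖x‖ ^ 2 := sub_pos.mpr (pow_lt_one₀ (norm_nonneg x) hx two_ne_zero)
    rw [ballBump_of_norm_le_one hx.le, ballBump_of_norm_le_one hx.le,
      ← Real.rpow_add_one hpos.ne', sub_add_cancel]

lemma hasCompactSupport_ballBump [ProperSpace E] {s : ℝ} (hs : s ≠ 0) :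
    HasCompactSupport (ballBump s : E → ℝ) := by
  refine HasCompactSupport.intro (isCompact_closedBall 0 1) fun x hx => ?_
  rw [mem_closedBall_zero_iff, not_le] at hx
  exact ballBump_of_one_le_norm hs hx.le

lemma abs_max_one_sub_norm_sq_sub_le (x y : E) :
    |max (1 - ‖x‖ ^ 2) 0 - max (1 - ‖y‖ ^ 2) 0| ≤ 2 * dist x y := by
  have hclip (z : E) : max (1 - ‖z‖ ^ 2) 0 = 1 - min ‖z‖ 1 ^ 2 := by
    rcases le_total ‖z‖ 1 with hz | hz
    · rw [min_eq_left hz, max_eq_left (sub_nonneg.mpr (pow_le_one₀ (norm_nonneg z) hz))]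
    · rw [min_eq_right hz, max_eq_right (sub_nonpos.mpr (one_le_pow₀ hz)), one_pow, sub_self]
  have hsum : |min ‖y‖ 1 + min ‖x‖ 1| ≤ 2 := by
    rw [abs_of_nonneg (by positivity)]
    linarith [min_le_right ‖x‖ 1, min_le_right ‖y‖ 1]
  have hdiff : |min ‖y‖ 1 - min ‖x‖ 1| ≤ dist x y := by
    rw [dist_comm, dist_eq_norm]
    exact (abs_min_sub_min_le_max _ _ _ _).trans
      (max_le (abs_norm_sub_norm_le y x) (by simp))
  calc |max (1 - ‖x‖ ^ 2) 0 - max (1 - ‖y‖ ^ 2) 0|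
      = |min ‖y‖ 1 + min ‖x‖ 1| * |min ‖y‖ 1 - min ‖x‖ 1| := by
        rw [hclip, hclip, ← abs_mul]
        ring_nf
    _ ≤ 2 * dist x y := by gcongr

lemma memHolder_ballBump {r : ℝ≥0} (hr : r ≤ 1) : MemHolder r (ballBump r : E → ℝ) := by
  refine ⟨2 ^ (r : ℝ), holderWith_of_dist_le fun x y => ?_⟩
  calc dist (ballBump r x) (ballBump r y)
      ≤ |max (1 - ‖x‖ ^ 2) 0 - max (1 - ‖y‖ ^ 2) 0| ^ (r : ℝ) :=
        abs_rpow_sub_rpow_le (le_max_right _ _) (le_max_right _ _) r.coe_nonneg hr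
    _ ≤ (2 * dist x y) ^ (r : ℝ) := by
        gcongr
        exact abs_max_one_sub_norm_sq_sub_le x y
    _ = ↑((2 : ℝ≥0) ^ (r : ℝ)) * dist x y ^ (r : ℝ) := by
        rw [Real.mul_rpow zero_le_two dist_nonneg, NNReal.coe_rpow, NNReal.coe_ofNat]

variable [InnerProductSpace ℝ E]

lemma memHolder_ballBump_smul [FiniteDimensional ℝ E] {F : Type*} [NormedAddCommGroup F]
    [NormedSpace ℝ F] {c : E → F} (hc : ContDiff ℝ 1 c) {r : ℝ≥0} (hr : r ≠ 0) (hr1 : r ≤ 1) :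
    MemHolder r fun x => ballBump r x • c x := by
  let χ : ContDiffBump (0 : E) := ⟨1, 2, one_pos, one_lt_two⟩
  have hcut : (fun x => ballBump r x • c x) = fun x => ballBump r x • χ x • c x := by
    funext x
    rcases le_total ‖x‖ 1 with hx | hx
    · rw [χ.one_of_mem_closedBall (mem_closedBall_zero_iff.mpr hx), one_smul]
    · rw [ballBump_of_one_le_norm (by exact_mod_cast hr) hx, zero_smul, zero_smul]
  have hsmooth : ContDiff ℝ 1 fun x => χ x • c x := χ.contDiff.smul hc
  have hsupp : HasCompactSupport fun x => χ x • c x := χ.hasCompactSupport.smul_right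
  obtain ⟨B, hB⟩ := hsupp.exists_bound_of_continuous hsmooth.continuous
  rw [hcut]
  exact memHolder_smul_of_bounded (memHolder_ballBump hr1)
    (memHolder_of_contDiff_of_hasCompactSupport hsmooth hsupp hr1)
    (fun x => (Real.norm_of_nonneg (ballBump_nonneg _ x)).trans_le (ballBump_le_one r.2 x)) hB

lemma hasFDerivAt_ballBump {s : ℝ} (hs : 1 < s) (x : E) :
    HasFDerivAt (ballBump s) (ballBump (s - 1) x • (-(2 * s)) • innerSL ℝ x) x := by
  have hsq : HasFDerivAt (fun x : E => 1 - ‖x‖ ^ 2) (-(2 • innerSL ℝ x)) x :=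
    (hasStrictFDerivAt_norm_sq x).hasFDerivAt.const_sub 1
  refine ((hasDerivAt_max_zero_rpow hs _).comp_hasFDerivAt x hsq).congr_fderiv ?_
  ext v
  simp only [ballBump, smul_apply, neg_apply, smul_eq_mul, nsmul_eq_mul]
  ring

lemma hasFDerivAt_ballBump_smul {F : Type*} [NormedAddCommGroup F] [NormedSpace ℝ F]
    {c : E → F} {c' : E →L[ℝ] F} {s : ℝ} (hs : 1 < s) {x : E} (hc : HasFDerivAt c c' x) :
    HasFDerivAt (fun x => ballBump s x • c x) (ballBump (s - 1) x •
      ((1 - ‖x‖ ^ 2) • c' + ((-(2 * s)) • innerSL ℝ x).smulRight (c x))) x := by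
  refine ((hasFDerivAt_ballBump hs x).smul hc).congr_fderiv ?_
  ext v
  simp [ballBump_eq_mul hs, smul_smul, mul_assoc]

/-- The induction replaces the target `F` by `E →L[ℝ] F`, the target of the derivative, which is
why `E` and `F` share a universe. -/
lemma isHolderSmooth_ballBump_smul [FiniteDimensional ℝ E] (l : ℕ) {F : Type u}
    [NormedAddCommGroup F] [NormedSpace ℝ F] {c : E → F} (hc : ContDiff ℝ (⊤ : ℕ∞) c) {s : ℝ}
    (hs : l < s) (hs1 : s ≤ l + 1) : IsHolderSmooth l s fun x => ballBump s x • c x := by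
  induction l generalizing F s with
  | zero =>
    rw [Nat.cast_zero] at hs
    lift s to ℝ≥0 using hs.le
    have hs0 : 0 < s := by exact_mod_cast hs
    exact isHolderSmooth_of_memHolder hs0 (memHolder_ballBump_smul
      (hc.of_le (by exact_mod_cast le_top)) hs0.ne' (by simpa using hs1))
  | succ l ih =>
    push_cast at hs hs1
    have hs2 : 1 < s := by linarith [l.cast_nonneg (α := ℝ)]
    have hfderiv : ContDiff ℝ (⊤ : ℕ∞) (fderiv ℝ c) := hc.fderiv_right (by simp)
    have hinner : ContDiff ℝ (⊤ : ℕ∞) fun x : E => (-(2 * s)) • innerSL ℝ x :=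
      (innerSL ℝ : E →L⋆[ℝ] E →L[ℝ] ℝ).contDiff.const_smul _
    have hsmooth : ContDiff ℝ (⊤ : ℕ∞) fun x =>
        (1 - ‖x‖ ^ 2) • fderiv ℝ c x + ((-(2 * s)) • innerSL ℝ x).smulRight (c x) :=
      ((contDiff_const.sub (contDiff_norm_sq ℝ)).smul hfderiv).add (hinner.smulRight hc)
    have hder := (ih hsmooth (lt_sub_iff_add_lt.mpr hs) (sub_le_iff_le_add.mpr hs1)).of_hasFDerivAt
      (sub_pos.mpr hs2).le
      fun x => hasFDerivAt_ballBump_smul hs2 (hc.differentiable (by simp) x).hasFDerivAt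
    rwa [sub_add_cancel] at hder

end Bump

section Sufficiency

lemma hfl_lt_and_le {β : ℝ} (hβ : 0 < β) : (hfl β : ℝ) < β ∧ β ≤ hfl β + 1 := by
  have hceil : hfl β + 1 = ⌈β⌉₊ := Nat.sub_add_cancel (Nat.one_le_ceil_iff.mpr hβ)
  refine ⟨Nat.lt_ceil.mp (by lia), ?_⟩
  exact_mod_cast hceil ▸ Nat.le_ceil β

variable {d : ℕ} {β γ κ1 κ2 : ℝ}

lemma IsHolderSmooth.exists_holderIso {p : EVec d → ℝ} (hβ : 0 < β)
    (hp : IsHolderSmooth (hfl β) β p) : ∃ L, 0 < L ∧ HolderIso d β L p := by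
  obtain ⟨hcont, C, hC, hrem⟩ := hp
  have hrem' (x y : EVec d) : |p x - taylorPolyMulti p (hfl β) y x| ≤ (C + 1) * dist x y ^ β :=
    (hrem x y).trans (by gcongr; exact le_add_of_nonneg_right zero_le_one)
  refine ⟨C + 1, by positivity, ?_⟩
  unfold HolderIso
  split_ifs with hle
  · have hzero : hfl β = 0 :=
      Nat.lt_one_iff.mp (by exact_mod_cast (hfl_lt_and_le hβ).1.trans_le hle)
    simpa [hzero, taylorPolyMulti] using hrem'
  · exact ⟨hcont, hrem'⟩

lemma MarginCond.div_const {p : EVec d → ℝ} (h : MarginCond d γ κ1 κ2 p) {a : ℝ} (ha : 0 < a) :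
    MarginCond d γ (κ1 / a) (κ2 * a ^ γ) fun x => p x / a := by
  intro ε hε hεκ
  have hset : {x | 0 < p x / a ∧ p x / a ≤ ε} = {x | 0 < p x ∧ p x ≤ a * ε} := by
    simp only [div_pos_iff_of_pos_right ha, div_le_iff₀' ha]
  rw [hset, mul_assoc, ← Real.mul_rpow ha.le hε.le]
  exact h _ (by positivity) ((le_div_iff₀' ha).mp hεκ)

lemma measure_closedBall_sdiff_ball_le {E : Type*} [NormedAddCommGroup E] [NormedSpace ℝ E]
    [FiniteDimensional ℝ E] [Nontrivial E] [MeasurableSpace E] [BorelSpace E] (μ : Measure E)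
    [μ.IsAddHaarMeasure] (x : E) {η : ℝ} (hη : 0 ≤ η) (hη1 : η ≤ 1) :
    μ (closedBall x 1 \ ball x (1 - η)) ≤
      ENNReal.ofReal (Module.finrank ℝ E * η) * μ (ball 0 1) := by
  have hbernoulli : 1 ≤ Module.finrank ℝ E * η + (1 - η) ^ Module.finrank ℝ E := by
    have := one_add_mul_le_pow (show -2 ≤ -η by linarith) (Module.finrank ℝ E)
    rw [← sub_eq_add_neg] at this
    linarith
  rw [measure_sdiff (ball_subset_closedBall.trans (closedBall_subset_closedBall (by linarith)))
    measurableSet_ball.nullMeasurableSet measure_ball_lt_top.ne,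
    Measure.addHaar_closedBall μ x zero_le_one, Measure.addHaar_ball μ x (sub_nonneg.mpr hη1),
    tsub_le_iff_right, ← add_mul, one_pow]
  gcongr
  exact (ENNReal.ofReal_le_ofReal hbernoulli).trans ENNReal.ofReal_add_le

lemma closure_ballBump_le_subset {E : Type*} [NormedAddCommGroup E] (hβ : 0 < β) {ε : ℝ}
    (hε : 0 ≤ ε) : closure {x : E | 0 < ballBump β x ∧ ballBump β x ≤ ε} ⊆
      closedBall 0 1 \ ball 0 (1 - ε ^ β⁻¹) := by
  refine closure_minimal ?_ (isClosed_closedBall.sdiff isOpen_ball)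
  rintro x ⟨hpos, hle⟩
  have hx : ‖x‖ ≤ 1 := by
    by_contra! hx
    exact hpos.ne' (ballBump_of_one_le_norm hβ.ne' hx.le)
  have hsq : 0 ≤ 1 - ‖x‖ ^ 2 := sub_nonneg.mpr (pow_le_one₀ (norm_nonneg x) hx)
  have hshell : 1 - ‖x‖ ≤ ε ^ β⁻¹ := calc
    1 - ‖x‖ ≤ 1 - ‖x‖ ^ 2 := sub_le_sub_left (pow_le_of_le_one (norm_nonneg x) hx two_ne_zero) 1
    _ ≤ ε ^ β⁻¹ := by
      rwa [Real.le_rpow_inv_iff_of_pos hsq hε hβ, ← ballBump_of_norm_le_one hx]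
  exact ⟨mem_closedBall_zero_iff.mpr hx, by rw [mem_ball_zero_iff]; linarith⟩

lemma marginCond_ballBump (hd : 1 ≤ d) (hβ : 0 < β) (hγβ : γ * β ≤ 1) :
    MarginCond d γ 1 (d * volume.real (ball (0 : EVec d) 1)) (ballBump β) := by
  intro ε hε hε1
  have : Nonempty (Fin d) := ⟨⟨0, hd⟩⟩
  have hrate : ε ^ β⁻¹ ≤ ε ^ γ :=
    Real.rpow_le_rpow_of_exponent_ge hε hε1 (by rwa [← one_div, le_div_iff₀ hβ])
  calc volume (closure {x : EVec d | 0 < ballBump β x ∧ ballBump β x ≤ ε})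
      ≤ volume (closedBall (0 : EVec d) 1 \ ball 0 (1 - ε ^ β⁻¹)) :=
        measure_mono (closure_ballBump_le_subset hβ hε.le)
    _ ≤ ENNReal.ofReal (d * ε ^ β⁻¹) * volume (ball (0 : EVec d) 1) := by
        simpa only [finrank_euclideanSpace_fin] using measure_closedBall_sdiff_ball_le volume
          (0 : EVec d) (by positivity) (Real.rpow_le_one hε.le hε1 (by positivity))
    _ = ENNReal.ofReal (d * volume.real (ball (0 : EVec d) 1) * ε ^ β⁻¹) := by
        rw [← ofReal_measureReal measure_ball_lt_top.ne, ← ENNReal.ofReal_mul (by positivity),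
          mul_right_comm]
    _ ≤ ENNReal.ofReal (d * volume.real (ball (0 : EVec d) 1) * ε ^ γ) := by gcongr

lemma integral_ballBump_pos (hβ : 0 < β) : 0 < ∫ x : EVec d, ballBump β x :=
  (continuous_ballBump hβ.le).integral_pos_of_hasCompactSupport_nonneg_nonzero
    (hasCompactSupport_ballBump hβ.ne') (ballBump_nonneg β) (x := 0) (by simp [ballBump])

/-- The normalised `ballBump`, the density that realises the smoothness `β` together with every
margin exponent `γ ≤ 1 / β`. -/
noncomputable def ballDensity (d : ℕ) (β : ℝ) (x : EVec d) : ℝ :=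
  ballBump β x / ∫ y : EVec d, ballBump β y

lemma isProbDensityE_ballDensity (hβ : 0 < β) : IsProbDensityE d (ballDensity d β) := by
  refine ⟨((continuous_ballBump hβ.le).div_const _).measurable,
    fun x => div_nonneg (ballBump_nonneg β x) (integral_ballBump_pos hβ).le, ?_⟩
  simp only [ballDensity, integral_div, div_self (integral_ballBump_pos hβ).ne']

lemma exists_holderIso_ballDensity (d : ℕ) (hβ : 0 < β) :
    ∃ L, 0 < L ∧ HolderIso d β L (ballDensity d β) :=
  (isHolderSmooth_ballBump_smul (hfl β) (contDiff_const (c := (∫ y : EVec d, ballBump β y)⁻¹))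
    (hfl_lt_and_le hβ).1 (hfl_lt_and_le hβ).2).exists_holderIso hβ

lemma hasCompactSupport_ballDensity (hβ : β ≠ 0) : HasCompactSupport (ballDensity d β) :=
  (hasCompactSupport_ballBump hβ).mul_right

lemma marginCond_ballDensity (hd : 1 ≤ d) (hβ : 0 < β) (hγβ : γ * β ≤ 1) :
    ∃ κ1 κ2, 0 < κ1 ∧ 0 < κ2 ∧ MarginCond d γ κ1 κ2 (ballDensity d β) := by
  have hI := integral_ballBump_pos (d := d) hβ
  have hball : 0 < volume.real (ball (0 : EVec d) 1) :=
    ENNReal.toReal_pos (measure_ball_pos _ _ one_pos).ne' measure_ball_lt_top.ne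
  exact ⟨_, _, by positivity, by positivity, (marginCond_ballBump hd hβ hγβ).div_const hI⟩

end Sufficiency

theorem statement4_general (d : ℕ) (hd : 1 ≤ d) (β γ : ℝ) (hβ : 0 < β) : List.TFAE [
    ∃ (L κ1 κ2 : ℝ) (p : EVec d → ℝ), 0 < L ∧ 0 < κ1 ∧ 0 < κ2 ∧
      IsProbDensityE d p ∧ HolderIso d β L p ∧ MarginCond d γ κ1 κ2 p,
    ∃ (L κ1 κ2 : ℝ) (p : EVec d → ℝ), 0 < L ∧ 0 < κ1 ∧ 0 < κ2 ∧
      IsProbDensityE d p ∧ HolderIso d β L p ∧ HasCompactSupport p ∧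
      MarginCond d γ κ1 κ2 p,
    γ * β ≤ 1] := by
  tfae_have 1 → 3 := fun ⟨_, _, _, _, hL, hκ1, _, hp, hH, hM⟩ =>
    hM.mul_le_one hH hp hd hβ hL hκ1
  tfae_have 3 → 2 := fun hγβ =>
    have ⟨L, hL, hH⟩ := exists_holderIso_ballDensity d hβ
    have ⟨κ1, κ2, hκ1, hκ2, hM⟩ := marginCond_ballDensity hd hβ hγβ
    ⟨L, κ1, κ2, ballDensity d β, hL, hκ1, hκ2, isProbDensityE_ballDensity hβ, hH,
      hasCompactSupport_ballDensity hβ.ne', hM⟩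
  tfae_have 2 → 1 := fun ⟨L, κ1, κ2, p, hL, hκ1, hκ2, hp, hH, _, hM⟩ =>
    ⟨L, κ1, κ2, p, hL, hκ1, hκ2, hp, hH, hM⟩
  tfae_finish

/-- Lemma 4.1.
For `β, γ > 0` there exist `L > 0`, `κ = (κ₁,κ₂) ∈ (0,∞)²` and a compactly supported
probability density in `𝒫^iso_d(β,L)` satisfying the `κ`-margin condition with exponent `γ`
if and only if `γβ ≤ 1`. -/
theorem statement4 (d : ℕ) (hd : 1 ≤ d) (β γ : ℝ) (hβ : 0 < β) (hγ : 0 < γ) :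
    (∃ (L κ1 κ2 : ℝ) (p : EVec d → ℝ), 0 < L ∧ 0 < κ1 ∧ 0 < κ2 ∧
      IsProbDensityE d p ∧ HolderIso d β L p ∧ HasCompactSupport p ∧
      MarginCond d γ κ1 κ2 p) ↔ γ * β ≤ 1 :=
  (statement4_general d hd β γ hβ).out 1 2
end

section
/- (Lemma 5.1(ii), lower variance bound.) Let 0 < β_i < ∞ for i = 1,…,d , L > 0, and let c₁₀ > 0 be any constant. Then there exists a constant c₁₁(β,L,c₁₀) > 0 such that for every p ∈ 𝒫_d(β,L), every t ∈ ℝ^d, and every bandwidth h = (h_1,…,h_d) with 0 < h_i ≤ c₁₀ p(t)^{1/β_i} for all i: c₁₁(β,L,c₁₀) p(t) / (n ∏_{i=1}^d h_i) ≤ n^{−1} ((K_h)² ∗ p)(t). -/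
open MeasureTheory Real
open scoped ENNReal BigOperators

noncomputable section

/-- `Vec d` is `ℝ^d` (with the product structure, used for anisotropic statements). -/
abbrev Vec (d : ℕ) := Fin d → ℝ

/-- Samples of size `n` from `ℝ^d`. -/
abbrev Sample (d n : ℕ) := Fin n → Vec d

/-- One-dimensional Taylor polynomial of `f` at `y'` of degree `l`, evaluated at `y`. -/
def taylorPoly (f : ℝ → ℝ) (l : ℕ) (y' y : ℝ) : ℝ :=
  ∑ k ∈ Finset.range (l + 1), iteratedDeriv k f y' / (Nat.factorial k : ℝ) * (y - y') ^ k

/-- The slice of `f : ℝ^d → ℝ` along coordinate `i` through the point `x`. -/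
def sliceFun {d : ℕ} (f : Vec d → ℝ) (i : Fin d) (x : Vec d) : ℝ → ℝ :=
  fun y => f (Function.update x i y)

/-- Anisotropic Hölder condition with exponents `β = (β_1, …, β_d)` and constant `L`:
in each coordinate `i`, the slices admit derivatives up to order `⌊β i⌋` (the largest
integer strictly less than `β i`) and the Taylor remainder of degree `⌊β i⌋` is bounded
by `L |y - y'| ^ (β i)`, uniformly in the remaining coordinates. For `β i ≤ 1` this is
the usual coordinatewise Hölder condition. -/
def HolderAniso (d : ℕ) (β : Vec d) (L : ℝ) (f : Vec d → ℝ) : Prop :=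
  ∀ i : Fin d,
    (∀ x : Vec d, ContDiff ℝ (hfl (β i)) (sliceFun f i x)) ∧
    ∀ (x : Vec d) (y y' : ℝ),
      |sliceFun f i x y - taylorPoly (sliceFun f i x) (hfl (β i)) y' y| ≤ L * |y - y'| ^ (β i)

/-- `p` is a probability density on `ℝ^d` (w.r.t. Lebesgue measure). -/
def IsProbDensity (d : ℕ) (p : Vec d → ℝ) : Prop :=
  Measurable p ∧ (∀ x, 0 ≤ p x) ∧ ∫ x, p x = 1

/-- The class `𝒫_d(β, L)` of anisotropic Hölder-smooth probability densities. -/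
def Pclass (d : ℕ) (β : Vec d) (L : ℝ) (p : Vec d → ℝ) : Prop :=
  IsProbDensity d p ∧ HolderAniso d β L p

/-- The unnormalized harmonic mean `β̄ = (∑ 1/β_i)⁻¹`. -/
def betaBar {d : ℕ} (β : Vec d) : ℝ := (∑ i, (β i)⁻¹)⁻¹

/-- `c₁(β, L) = sup { ‖p‖_∞ : p ∈ 𝒫_d(β, L) }`. -/
def c1const (d : ℕ) (β : Vec d) (L : ℝ) : ℝ :=
  sSup {c | ∃ p x, Pclass d β L p ∧ c = p x}

/-- The measure on `ℝ^d` with Lebesgue density `p`. -/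
def pdfMeasure (d : ℕ) (p : Vec d → ℝ) : Measure (Vec d) :=
  volume.withDensity fun x => ENNReal.ofReal (p x)

/-- The joint law `P^{⊗n}` of an i.i.d. sample of size `n` from the density `p`. -/
def jointMeasure (d n : ℕ) (p : Vec d → ℝ) : Measure (Sample d n) :=
  Measure.pi fun _ => pdfMeasure d p

/-- The `p`-dependent rate `ψ^n_{x,β} = min{ x, (x/n)^{β̄/(2β̄+1)} }` (with `bb = β̄`). -/
def psiRate (n : ℕ) (bb x : ℝ) : ℝ := min x ((x / n) ^ (bb / (2 * bb + 1)))

end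

noncomputable section

/-- `K` is a product kernel `K(x) = ∏ K_i(x_i)` whose factors are nonnegative, symmetric,
supported on `[-1,1]`, continuous on their support, integrate to one and are positive at `0`. -/
def IsProductKernel (d : ℕ) (K : Vec d → ℝ) : Prop :=
  ∃ Ki : Fin d → (ℝ → ℝ),
    (∀ x, K x = ∏ i, Ki i (x i)) ∧
    ∀ i : Fin d,
      (∀ y, 0 ≤ Ki i y) ∧ (∀ y, Ki i (-y) = Ki i y) ∧
      (∀ y, y ∉ Set.Icc (-1 : ℝ) 1 → Ki i y = 0) ∧
      ContinuousOn (Ki i) (Set.Icc (-1) 1) ∧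
      (∫ y, Ki i y = 1) ∧ 0 < Ki i 0

/-- The rescaled kernel `K_h(x) = (∏ h_i)⁻¹ K(x_1/h_1, …, x_d/h_d)`. -/
def scaledKernel (d : ℕ) (K : Vec d → ℝ) (h : Vec d) (x : Vec d) : ℝ :=
  (∏ i, h i)⁻¹ * K (fun i => x i / h i)

/-- The kernel density estimator `p̂_{n,h}(t) = n⁻¹ ∑_i K_h(t - X_i)`. -/
def kde (d n : ℕ) (K : Vec d → ℝ) (h : Vec d) (X : Sample d n) (t : Vec d) : ℝ :=
  (n : ℝ)⁻¹ * ∑ i, scaledKernel d K h (fun j => t j - X i j)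

/-- `‖K‖_sup`. -/
def KsupNorm (d : ℕ) (K : Vec d → ℝ) : ℝ := ⨆ x, |K x|

/-- `‖K‖₂² = ∫ K² dλ^d`. -/
def K2sq (d : ℕ) (K : Vec d → ℝ) : ℝ := ∫ x, (K x) ^ 2

/-- The exact variance proxy `σ_t²(h) = n⁻¹ ((K_h)² ∗ p)(t)`. -/
def sigmaSq (d n : ℕ) (K : Vec d → ℝ) (p : Vec d → ℝ) (h : Vec d) (t : Vec d) : ℝ :=
  (n : ℝ)⁻¹ * ∫ y, (scaledKernel d K h (fun i => t i - y i)) ^ 2 * p y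

/-- The truncation level `log²n / (n² ∏ h_i²)`. -/
def truncLevel (d n : ℕ) (h : Vec d) : ℝ :=
  (Real.log n) ^ 2 / ((n : ℝ) ^ 2 * (∏ i, h i) ^ 2)

/-- `σ²_{t,trunc}(h) = max{ log²n/(n² ∏ h_i²), σ_t²(h) }`. -/
def sigmaSqTrunc (d n : ℕ) (K : Vec d → ℝ) (p : Vec d → ℝ) (h : Vec d) (t : Vec d) : ℝ :=
  max (truncLevel d n h) (sigmaSq d n K p h t)

/-- The empirical variance `σ̃_t²(h) = (n² ∏ h_i²)⁻¹ ∑_i K²((t - X_i)/h)`. -/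
def sigmaTildeSq (d n : ℕ) (K : Vec d → ℝ) (h : Vec d) (X : Sample d n) (t : Vec d) : ℝ :=
  ((n : ℝ) ^ 2 * (∏ i, h i) ^ 2)⁻¹ * ∑ i, (K (fun j => (t j - X i j) / h j)) ^ 2

/-- `σ̃²_{t,trunc}(h) = max{ log²n/(n² ∏ h_i²), σ̃_t²(h) }`. -/
def sigmaTildeSqTrunc (d n : ℕ) (K : Vec d → ℝ) (h : Vec d) (X : Sample d n) (t : Vec d) : ℝ :=
  max (truncLevel d n h) (sigmaTildeSq d n K h X t)

/-- Membership of the multi-index `j` in the dyadic grid `𝒥`, i.e. `∑ j_i ≤ ⌊log₂(n/log²n)⌋`. -/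
def gridOK (d n : ℕ) (j : Fin d → ℕ) : Prop :=
  ((∑ i, j i : ℕ) : ℝ) ≤ Real.logb 2 ((n : ℝ) / (Real.log n) ^ 2)

/-- The bandwidth `(2^{-j_1}, …, 2^{-j_d})` associated with a multi-index `j`. -/
def bwOf (d : ℕ) (j : Fin d → ℕ) : Vec d := fun i => (2 : ℝ) ^ (-(j i : ℝ))

/-- The bias upper bound `B_t(h) = L ∑_i c_{9,i}(β) h_i^{β_i}`,
with `c_{9,i}(β) = ∫ |x_i|^{β_i} |K(x)| dλ^d(x)`. -/
def biasBound (d : ℕ) (K : Vec d → ℝ) (β : Vec d) (L : ℝ) (h : Vec d) : ℝ :=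
  L * ∑ i, (∫ x : Vec d, |x i| ^ (β i) * |K x|) * h i ^ (β i)

/-- The bias `b_t(h) = p(t) - (K_h ∗ p)(t)`. -/
def biasAt (d : ℕ) (K : Vec d → ℝ) (p : Vec d → ℝ) (h : Vec d) (t : Vec d) : ℝ :=
  p t - ∫ y, scaledKernel d K h (fun i => t i - y i) * p y

end

/-!
A nonnegative Hölder function need not stay comparable to `p t` on the whole box
`[t, t + ρ]` with `ρ i` of order `p t ^ (1 / β i)`: for `β i > 1` it may vanish nearby. It does stay
comparable on a fixed fraction of the box. The `N`-th finite difference of the Taylor polynomial of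
a slice vanishes, so `f x` is at most `2 ^ N` times one of `f (x + u), …, f (x + N u)`, up to a
remainder. Doing this in each coordinate gives, for every `u`, a multi-index `k ∈ {1, …, N} ^ d`
with `p t ≲ p (t + k * u)`. Hence the preimages of the good set under the dilations `u ↦ k * u`
cover the smaller box `[0, ρ / N]`, and a union bound shows that the good set is large. On it the
squared kernel is bounded below as well, and Markov's inequality concludes.
-/

open scoped Topology

lemma exists_abs_eval_zero_le_two_pow_mul_abs_eval_natCast {R : Type*} [CommRing R] [LinearOrder R]
    [IsStrictOrderedRing R] {Q : Polynomial R} {N : ℕ} (hQ : Q.natDegree < N) :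
    ∃ k ∈ Finset.Icc 1 N, |Q.eval 0| ≤ 2 ^ N * |Q.eval (k : R)| := by
  obtain ⟨k, hk, hmax⟩ := Finset.exists_max_image (Finset.Icc 1 N) (fun k => |Q.eval (k : R)|)
    ⟨1, Finset.mem_Icc.2 ⟨le_rfl, Nat.one_le_of_lt hQ⟩⟩
  have hdiff : ∑ j ∈ Finset.range (N + 1),
      ((-1) ^ (N - j) * (N.choose j : R)) * Q.eval (j : R) = 0 := by
    simpa [fwdDiff_iter_eq_sum_shift] using
      congrFun (Polynomial.fwdDiff_iter_eq_zero_of_degree_lt hQ) 0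
  have hchoose : ∑ j ∈ Finset.range N, (N.choose (j + 1) : R) ≤ 2 ^ N := by
    have h := Finset.sum_range_succ' N.choose N
    rw [Nat.sum_range_choose] at h
    exact_mod_cast h ▸ Nat.le_add_right _ _
  rw [Finset.sum_range_succ', add_comm] at hdiff
  refine ⟨k, hk, ?_⟩
  calc |Q.eval 0|
      = |∑ j ∈ Finset.range N,
          ((-1) ^ (N - (j + 1)) * (N.choose (j + 1) : R)) * Q.eval ((j + 1 : ℕ) : R)| := by
        simpa [abs_mul] using congrArg abs (eq_neg_of_add_eq_zero_left hdiff)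
    _ ≤ ∑ j ∈ Finset.range N, (N.choose (j + 1) : R) * |Q.eval ((j + 1 : ℕ) : R)| := by
        simpa [abs_mul] using Finset.abs_sum_le_sum_abs (fun j =>
          ((-1) ^ (N - (j + 1)) * (N.choose (j + 1) : R)) * Q.eval ((j + 1 : ℕ) : R))
          (Finset.range N)
    _ ≤ ∑ j ∈ Finset.range N, (N.choose (j + 1) : R) * |Q.eval (k : R)| := by
        refine Finset.sum_le_sum fun j hj => mul_le_mul_of_nonneg_left ?_ (Nat.cast_nonneg _)
        exact hmax _ (Finset.mem_Icc.2 ⟨j.succ_pos, Finset.mem_range.1 hj⟩)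
    _ ≤ 2 ^ N * |Q.eval (k : R)| := by
        rw [← Finset.sum_mul]
        gcongr

lemma taylorPoly_self (f : ℝ → ℝ) (l : ℕ) (x : ℝ) : taylorPoly f l x x = f x := by
  simp [taylorPoly, Finset.sum_range_succ']

lemma exists_abs_le_of_abs_sub_taylorPoly_le {f : ℝ → ℝ} {l N : ℕ} {b L x : ℝ} (hlN : l < N)
    (hf : ∀ y, |f y - taylorPoly f l x y| ≤ L * |y - x| ^ b) (u : ℝ) :
    ∃ k ∈ Finset.Icc 1 N, |f x| ≤ 2 ^ N * (|f (x + k * u)| + L * |k * u| ^ b) := by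
  set Q : Polynomial ℝ := ∑ m ∈ Finset.range (l + 1),
    Polynomial.C (iteratedDeriv m f x / m.factorial * u ^ m) * Polynomial.X ^ m with hQ
  have hdeg : Q.natDegree < N :=
    (Polynomial.natDegree_sum_le_of_forall_le _ _ fun m hm =>
      (Polynomial.natDegree_C_mul_X_pow_le _ _).trans
        (Nat.lt_succ_iff.1 (Finset.mem_range.1 hm))).trans_lt hlN
  have heval : ∀ r : ℝ, Q.eval r = taylorPoly f l x (x + r * u) := fun r => by
    simp only [hQ, Polynomial.eval_finsetSum, Polynomial.eval_mul, Polynomial.eval_C,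
      Polynomial.eval_pow, Polynomial.eval_X, taylorPoly, add_sub_cancel_left]
    exact Finset.sum_congr rfl fun m _ => by ring
  obtain ⟨k, hk, hle⟩ := exists_abs_eval_zero_le_two_pow_mul_abs_eval_natCast hdeg
  simp only [heval, zero_mul, add_zero, taylorPoly_self] at hle
  refine ⟨k, hk, hle.trans ?_⟩
  gcongr
  have hrem := hf (x + k * u)
  rw [add_sub_cancel_left, abs_sub_comm] at hrem
  linarith [abs_sub_abs_le_abs_sub (taylorPoly f l x (x + k * u)) (f (x + k * u))]

lemma volume_preimage_mul_le {ι : Type*} [Fintype ι] {D : ι → ℝ} (hD : ∀ i, 1 ≤ D i)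
    (s : Set (ι → ℝ)) : volume ((fun u => D * u) ⁻¹' s) ≤ volume s := by
  classical
  have hprod : 1 ≤ ∏ i, D i :=
    Finset.prod_induction D (1 ≤ ·) (fun _ _ => one_le_mul_of_one_le_of_one_le) le_rfl
      fun i _ => hD i
  have hdet : LinearMap.det (Matrix.toLin' (Matrix.diagonal D)) = ∏ i, D i := by
    rw [LinearMap.det_toLin', Matrix.det_diagonal]
  have hfun : ⇑(Matrix.toLin' (Matrix.diagonal D)) = fun u => D * u := by
    ext u i
    simp [Matrix.mulVec_diagonal]
  rw [← hfun, Measure.addHaar_preimage_linearMap volume (hdet ▸ (one_pos.trans_le hprod).ne'), hdet,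
    abs_of_pos (inv_pos.2 (one_pos.trans_le hprod))]
  exact mul_le_of_le_one_left' (ENNReal.ofReal_le_one.2 (inv_le_one_of_one_le₀ hprod))

/-- The points of the box with lower corner `x` and side lengths `ρ` at which `|p|` is at least
`|p x| / c`: the part of the box on which `p` is comparable to its value at the corner. -/
def comparableBox {d : ℕ} (p : Vec d → ℝ) (c : ℝ) (x ρ : Vec d) : Set (Vec d) :=
  {y ∈ Set.Icc x (x + ρ) | |p x| ≤ c * |p y|}

namespace HolderAniso

variable {d : ℕ} {β : Vec d} {L : ℝ} {p : Vec d → ℝ}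

lemma const_nonneg (hp : HolderAniso d β L p) (i : Fin d) : 0 ≤ L := by
  simpa using (abs_nonneg _).trans ((hp i).2 0 1 0)

lemma exists_abs_le_coord (hp : HolderAniso d β L p) {N : ℕ} {i : Fin d} (hN : hfl (β i) < N)
    (x : Vec d) (u : ℝ) :
    ∃ k ∈ Finset.Icc 1 N,
      |p x| ≤ 2 ^ N * (|p (Function.update x i (x i + k * u))| + L * |k * u| ^ β i) := by
  simpa [sliceFun] using
    exists_abs_le_of_abs_sub_taylorPoly_le hN (fun y => (hp i).2 x y (x i)) u

lemma exists_abs_le_finset (hp : HolderAniso d β L p) {N : ℕ} (hN : ∀ i, hfl (β i) < N)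
    (x u : Vec d) (S : Finset (Fin d)) :
    ∃ k : Fin d → ℕ, (∀ i ∈ S, k i ∈ Finset.Icc 1 N) ∧ (∀ i ∉ S, k i = 0) ∧
      |p x| ≤ 2 ^ (N * S.card) *
        (|p (x + fun i => k i * u i)| + L * ∑ i ∈ S, |k i * u i| ^ β i) := by
  induction S using Finset.induction_on with
  | empty => exact ⟨0, by simp, by simp, by simp [← Pi.zero_def]⟩
  | insert i S hi ih =>
    obtain ⟨k, hkS, hk0, hk⟩ := ih
    obtain ⟨m, hm, hle⟩ := hp.exists_abs_le_coord (hN i) (x + fun j => k j * u j) (u i)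
    have hupdate : Function.update (x + fun j => (k j : ℝ) * u j) i
        ((x + fun j => (k j : ℝ) * u j) i + m * u i) =
        x + fun j => (Function.update k i m j : ℝ) * u j := by
      ext j
      rcases eq_or_ne j i with rfl | hj
      · simp [hk0 j hi]
      · simp [hj]
    have hsum : ∑ j ∈ S, |(Function.update k i m j : ℝ) * u j| ^ β j =
        ∑ j ∈ S, |k j * u j| ^ β j :=
      Finset.sum_congr rfl fun j hj => by
        rw [Function.update_of_ne (ne_of_mem_of_not_mem hj hi)]
    have hrem : 0 ≤ L * ∑ j ∈ S, |k j * u j| ^ β j :=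
      mul_nonneg (hp.const_nonneg i) (Finset.sum_nonneg fun j _ => by positivity)
    refine ⟨Function.update k i m, fun j hj => ?_, fun j hj => ?_, ?_⟩
    · rcases eq_or_ne j i with rfl | hji
      · simpa using hm
      · simpa [hji] using hkS j (Finset.mem_of_mem_insert_of_ne hj hji)
    · rw [Finset.mem_insert, not_or] at hj
      simpa [hj.1] using hk0 j hj.2
    · rw [hupdate] at hle
      rw [Finset.sum_insert hi, hsum, Function.update_self, Finset.card_insert_of_notMem hi,
        mul_add_one, pow_add, mul_assoc]
      refine hk.trans (mul_le_mul_of_nonneg_left ?_ (by positivity))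
      linarith [le_mul_of_one_le_left hrem (one_le_pow₀ one_le_two : (1 : ℝ) ≤ 2 ^ N)]

lemma exists_abs_le (hp : HolderAniso d β L p) {N : ℕ} (hN : ∀ i, hfl (β i) < N)
    (x u : Vec d) :
    ∃ k ∈ Fintype.piFinset fun _ : Fin d => Finset.Icc 1 N,
      |p x| ≤ 2 ^ (N * d) * (|p (x + fun i => k i * u i)| + L * ∑ i, |k i * u i| ^ β i) := by
  obtain ⟨k, hk, -, hle⟩ := hp.exists_abs_le_finset hN x u Finset.univ
  exact ⟨k, Fintype.mem_piFinset.2 fun i => hk i (Finset.mem_univ i), by simpa using hle⟩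

lemma Icc_div_subset_iUnion_preimage_comparableBox (hp : HolderAniso d β L p)
    (hβ : ∀ i, 0 ≤ β i) {N : ℕ} (hN : ∀ i, hfl (β i) < N) {x ρ : Vec d}
    (hsmall : 2 ^ (N * d) * L * ∑ i, ρ i ^ β i ≤ |p x| / 2) :
    Set.Icc 0 (fun i => ρ i / N) ⊆ ⋃ k ∈ Fintype.piFinset fun _ : Fin d => Finset.Icc 1 N,
      (fun u => (fun i => (k i : ℝ)) * u) ⁻¹'
        ((x + ·) ⁻¹' comparableBox p (2 ^ (N * d + 1)) x ρ) := by
  rintro u ⟨hu0, huρ⟩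
  obtain ⟨k, hk, hle⟩ := hp.exists_abs_le hN x u
  have hpos : ∀ i, 0 ≤ (k i : ℝ) * u i := fun i => mul_nonneg (Nat.cast_nonneg _) (hu0 i)
  have hbox : ∀ i, k i * u i ≤ ρ i := fun i => by
    have hN0 : (0 : ℝ) < N := Nat.cast_pos.2 ((Nat.zero_le _).trans_lt (hN i))
    have hkN : (k i : ℝ) ≤ N :=
      Nat.cast_le.2 (Finset.mem_Icc.1 (Fintype.mem_piFinset.1 hk i)).2
    calc k i * u i ≤ N * (ρ i / N) := mul_le_mul hkN (huρ i) (hu0 i) hN0.le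
      _ = ρ i := mul_div_cancel₀ _ hN0.ne'
  have hrem : 2 ^ (N * d) * (L * ∑ i, |k i * u i| ^ β i) ≤ |p x| / 2 := by
    refine le_trans ?_ hsmall
    simp only [mul_assoc, Finset.mul_sum]
    gcongr with i
    · exact hp.const_nonneg i
    · exact hβ i
    · exact (abs_of_nonneg (hpos i)).trans_le (hbox i)
  refine Set.mem_biUnion hk ⟨⟨fun i => ?_, fun i => ?_⟩, ?_⟩
  · exact le_add_of_nonneg_right (hpos i)
  · exact add_le_add_right (hbox i) (x i)
  · change |p x| ≤ 2 ^ (N * d + 1) * |p (x + fun i => k i * u i)|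
    rw [pow_succ]
    linarith

lemma volume_Icc_div_le_pow_mul_volume_comparableBox (hp : HolderAniso d β L p)
    (hβ : ∀ i, 0 ≤ β i) {N : ℕ} (hN : ∀ i, hfl (β i) < N) {x ρ : Vec d}
    (hsmall : 2 ^ (N * d) * L * ∑ i, ρ i ^ β i ≤ |p x| / 2) :
    volume (Set.Icc 0 fun i => ρ i / N) ≤
      (N : ℝ≥0∞) ^ d * volume (comparableBox p (2 ^ (N * d + 1)) x ρ) := by
  set E := comparableBox p (2 ^ (N * d + 1)) x ρ
  calc volume (Set.Icc 0 fun i => ρ i / N)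
      ≤ ∑ k ∈ Fintype.piFinset fun _ : Fin d => Finset.Icc 1 N,
          volume ((fun u => (fun i => (k i : ℝ)) * u) ⁻¹' ((x + ·) ⁻¹' E)) :=
        (measure_mono (hp.Icc_div_subset_iUnion_preimage_comparableBox hβ hN hsmall)).trans
          (measure_biUnion_finset_le _ _)
    _ ≤ ∑ _k ∈ Fintype.piFinset fun _ : Fin d => Finset.Icc 1 N, volume E :=
        Finset.sum_le_sum fun k hk => (volume_preimage_mul_le (fun i => Nat.one_le_cast.2
          (Finset.mem_Icc.1 (Fintype.mem_piFinset.1 hk i)).1) _).trans_eq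
            (measure_preimage_add _ _ _)
    _ = (N : ℝ≥0∞) ^ d * volume E := by simp

theorem prod_le_pow_mul_volume_real_comparableBox (hp : HolderAniso d β L p) (hβ : ∀ i, 0 ≤ β i)
    {N : ℕ} (hN : ∀ i, hfl (β i) < N) {x ρ : Vec d} (hρ : ∀ i, 0 ≤ ρ i)
    (hsmall : 2 ^ (N * d) * L * ∑ i, ρ i ^ β i ≤ |p x| / 2) :
    ∏ i, ρ i ≤ (N : ℝ) ^ (2 * d) * volume.real (comparableBox p (2 ^ (N * d + 1)) x ρ) := by
  set E := comparableBox p (2 ^ (N * d + 1)) x ρ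
  have hE : volume E ≠ ⊤ := ((measure_mono (Set.sep_subset _ _)).trans_lt
    isCompact_Icc.measure_lt_top).ne
  have hcover : ∏ i, ρ i / N ≤ (N : ℝ) ^ d * volume.real E := by
    have h := ENNReal.toReal_mono (ENNReal.mul_ne_top (by simp) hE)
      (hp.volume_Icc_div_le_pow_mul_volume_comparableBox hβ hN hsmall)
    rw [Real.volume_Icc_pi_toReal (a := 0) fun i => div_nonneg (hρ i) N.cast_nonneg] at h
    simpa [measureReal_def] using h
  calc ∏ i, ρ i = (N : ℝ) ^ d * ∏ i, ρ i / N := by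
        rw [← Fin.prod_const, ← Finset.prod_mul_distrib]
        exact Finset.prod_congr rfl fun i _ =>
          (mul_div_cancel₀ (ρ i) (Nat.cast_ne_zero.2 (Nat.ne_zero_of_lt (hN i)))).symm
    _ ≤ (N : ℝ) ^ d * ((N : ℝ) ^ d * volume.real E) := by gcongr
    _ = (N : ℝ) ^ (2 * d) * volume.real E := by ring

end HolderAniso

lemma eventually_mul_sum_rpow_le_half {ι : Type*} [Fintype ι] {β : ι → ℝ} (hβ : ∀ i, 0 < β i)
    (B : ℝ) {c : ℝ} (hc : 0 ≤ c) :
    ∀ᶠ η in 𝓝[>] (0 : ℝ), ∀ (a : ℝ) (h : ι → ℝ), 0 ≤ a →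
      (∀ i, 0 ≤ h i ∧ h i ≤ c * a ^ (β i)⁻¹) → B * ∑ i, (η * h i) ^ β i ≤ a / 2 := by
  have hcont : ContinuousAt (fun η : ℝ => |B| * ∑ i, (η * c) ^ β i) 0 :=
    continuousAt_const.mul <| tendsto_finsetSum _ fun i _ =>
      (continuousAt_id.mul continuousAt_const).rpow_const (Or.inr (hβ i).le)
  have hzero : |B| * ∑ i, ((0 : ℝ) * c) ^ β i < 1 / 2 := by
    simp [fun i => Real.zero_rpow (hβ i).ne']
  filter_upwards [mem_nhdsWithin_of_mem_nhds (hcont.eventually_lt_const hzero),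
    self_mem_nhdsWithin] with η hsmall (hη : 0 < η) a h ha hh
  have hterm : ∀ i, (η * h i) ^ β i ≤ (η * c) ^ β i * a := fun i => by
    calc (η * h i) ^ β i ≤ (η * (c * a ^ (β i)⁻¹)) ^ β i :=
          Real.rpow_le_rpow (mul_nonneg hη.le (hh i).1)
            (mul_le_mul_of_nonneg_left (hh i).2 hη.le) (hβ i).le
      _ = (η * c) ^ β i * a := by
          rw [← mul_assoc, Real.mul_rpow (by positivity) (by positivity),
            Real.rpow_inv_rpow ha (hβ i).ne']
  calc B * ∑ i, (η * h i) ^ β i ≤ |B| * ∑ i, (η * h i) ^ β i :=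
        mul_le_mul_of_nonneg_right (le_abs_self B) <| Finset.sum_nonneg fun i _ =>
          Real.rpow_nonneg (mul_nonneg hη.le (hh i).1) _
    _ ≤ |B| * ∑ i, (η * c) ^ β i * a :=
        mul_le_mul_of_nonneg_left (Finset.sum_le_sum fun i _ => hterm i) (abs_nonneg B)
    _ = (|B| * ∑ i, (η * c) ^ β i) * a := by rw [← Finset.sum_mul, mul_assoc]
    _ ≤ 1 / 2 * a := mul_le_mul_of_nonneg_right hsmall.le ha
    _ = a / 2 := by ring

lemma mul_measureReal_le_integral_of_le {α : Type*} [MeasurableSpace α] {μ : Measure α}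
    {f : α → ℝ} (hf0 : 0 ≤ f) (hf : Integrable f μ) {s : Set α} {c : ℝ}
    (hs : ∀ y ∈ s, c ≤ f y) : c * μ.real s ≤ ∫ y, f y ∂μ := by
  rcases le_or_gt c 0 with hc | hc
  · exact (mul_nonpos_of_nonpos_of_nonneg hc measureReal_nonneg).trans (integral_nonneg hf0)
  · calc c * μ.real s ≤ c * μ.real {y | c ≤ f y} :=
          mul_le_mul_of_nonneg_left (measureReal_mono hs (hf.measure_ge_lt_top hc).ne) hc.le
      _ ≤ ∫ y, f y ∂μ := mul_meas_ge_le_integral_of_nonneg (ae_of_all μ hf0) hf c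

section Variance

variable {d : ℕ} {K p : Vec d → ℝ}

lemma integrable_sq_scaledKernel_mul (hK : Measurable K) {M : ℝ} (hKM : ∀ x, |K x| ≤ M)
    (hp : Integrable p) (h t : Vec d) :
    Integrable fun y => scaledKernel d K h (fun i => t i - y i) ^ 2 * p y := by
  have hmeas : Measurable fun y : Vec d => scaledKernel d K h (fun i => t i - y i) :=
    (hK.comp (by fun_prop)).const_mul _
  refine hp.bdd_mul (c := (|(∏ i, h i)⁻¹| * M) ^ 2) (hmeas.pow_const 2).aestronglyMeasurable
    (ae_of_all _ fun y => ?_)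
  rw [norm_pow, Real.norm_eq_abs, scaledKernel, abs_mul]
  gcongr
  exact hKM _

lemma inv_prod_mul_le_scaledKernel_sub {κ η : ℝ} (hK : ∀ x, ‖x‖ ≤ η → κ ≤ K x) (hη : 0 ≤ η)
    {h : Vec d} (hh : ∀ i, 0 < h i) {t y : Vec d} (hy : y ∈ Set.Icc t (t + η • h)) :
    (∏ i, h i)⁻¹ * κ ≤ scaledKernel d K h (fun i => t i - y i) := by
  refine mul_le_mul_of_nonneg_left (hK _ ((pi_norm_le_iff_of_nonneg hη).2 fun i => ?_))
    (inv_nonneg.2 (Finset.prod_nonneg fun i _ => (hh i).le))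
  have hyi : y i ≤ t i + η * h i := hy.2 i
  rw [Real.norm_eq_abs, abs_div, abs_of_pos (hh i), div_le_iff₀ (hh i), abs_sub_comm,
    abs_of_nonneg (sub_nonneg.2 (hy.1 i))]
  linarith

lemma mul_volume_real_comparableBox_le_sigmaSq (hK : Measurable K) {M : ℝ}
    (hKM : ∀ x, |K x| ≤ M) {κ η : ℝ} (hκ : 0 ≤ κ) (hKκ : ∀ x, ‖x‖ ≤ η → κ ≤ K x) (hη : 0 ≤ η)
    (hp : Integrable p) (hp0 : ∀ x, 0 ≤ p x) {c : ℝ} (hc : 0 < c) {h : Vec d}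
    (hh : ∀ i, 0 < h i) (t : Vec d) (n : ℕ) :
    (n : ℝ)⁻¹ * (((∏ i, h i)⁻¹ * κ) ^ 2 * (p t / c) *
      volume.real (comparableBox p c t (η • h))) ≤ sigmaSq d n K p h t := by
  refine mul_le_mul_of_nonneg_left (mul_measureReal_le_integral_of_le
    (fun y => mul_nonneg (sq_nonneg _) (hp0 y)) (integrable_sq_scaledKernel_mul hK hKM hp h t) ?_)
    (by positivity)
  rintro y ⟨hbox, hcomp⟩
  rw [abs_of_nonneg (hp0 t), abs_of_nonneg (hp0 y)] at hcomp
  have hprod : 0 ≤ (∏ i, h i)⁻¹ := inv_nonneg.2 (Finset.prod_nonneg fun i _ => (hh i).le)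
  have hkernel := inv_prod_mul_le_scaledKernel_sub hKκ hη hh hbox
  have hdensity : p t / c ≤ p y := (div_le_iff₀' hc).2 hcomp
  have hpt : 0 ≤ p t / c := div_nonneg (hp0 t) hc.le
  gcongr

end Variance

namespace IsProductKernel

variable {d : ℕ} {K : Vec d → ℝ}

lemma measurable (hK : IsProductKernel d K) : Measurable K := by
  obtain ⟨Ki, hKi, h⟩ := hK
  have hmeas : ∀ i, Measurable (Ki i) := fun i => by
    obtain ⟨-, -, hsupp, hcont, -⟩ := h i
    have hzero : (Set.Icc (-1 : ℝ) 1)ᶜ.domRestrict (Ki i) = 0 := funext fun y => hsupp y y.2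
    exact measurable_of_restrict_of_restrict_compl measurableSet_Icc hcont.domRestrict.measurable
      (hzero ▸ measurable_zero)
  rw [funext hKi]
  exact Finset.measurable_fun_prod _ fun i _ => (hmeas i).comp (measurable_pi_apply i)

lemma exists_abs_le (hK : IsProductKernel d K) : ∃ M, ∀ x, |K x| ≤ M := by
  obtain ⟨Ki, hKi, h⟩ := hK
  have hbdd : ∀ i, ∃ M, ∀ y, |Ki i y| ≤ M := fun i => by
    obtain ⟨-, -, hsupp, hcont, -⟩ := h i
    obtain ⟨M, hM⟩ := isCompact_Icc.exists_bound_of_continuousOn hcont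
    refine ⟨max M 0, fun y => ?_⟩
    by_cases hy : y ∈ Set.Icc (-1 : ℝ) 1
    · exact (hM y hy).trans (le_max_left _ _)
    · simp [hsupp y hy]
  choose M hM using hbdd
  refine ⟨∏ i, M i, fun x => ?_⟩
  rw [hKi, Finset.abs_prod]
  exact Finset.prod_le_prod (fun i _ => abs_nonneg _) fun i _ => hM i _

lemma zero_pos (hK : IsProductKernel d K) : 0 < K 0 := by
  obtain ⟨Ki, hKi, h⟩ := hK
  rw [hKi]
  exact Finset.prod_pos fun i _ => (h i).2.2.2.2.2

lemma continuousAt_zero (hK : IsProductKernel d K) : ContinuousAt K 0 := by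
  obtain ⟨Ki, hKi, h⟩ := hK
  have hcont : ∀ i, ContinuousAt (Ki i) 0 := fun i =>
    (h i).2.2.2.1.continuousAt (Icc_mem_nhds (by norm_num) (by norm_num))
  rw [funext hKi]
  exact tendsto_finsetProd _ fun i _ =>
    ContinuousAt.comp (f := fun x : Vec d => x i) (hcont i) (continuous_apply i).continuousAt

end IsProductKernel

theorem statement8_general {d : ℕ} {K : Vec d → ℝ} (hK : Measurable K) {M : ℝ}
    (hKM : ∀ x, |K x| ≤ M) {κ : ℝ} (hκ : 0 < κ) (hKκ : ∀ᶠ x in 𝓝 0, κ ≤ K x) {β : Vec d}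
    (hβ : ∀ i, 0 < β i) (L : ℝ) {c10 : ℝ} (hc10 : 0 ≤ c10) :
    ∃ c11 : ℝ, 0 < c11 ∧
      ∀ p : Vec d → ℝ, Integrable p → (∀ x, 0 ≤ p x) → HolderAniso d β L p →
        ∀ t : Vec d, ∀ n : ℕ, ∀ h : Vec d, (∀ i, 0 < h i ∧ h i ≤ c10 * p t ^ (β i)⁻¹) →
          c11 * p t / (n * ∏ i, h i) ≤ sigmaSq d n K p h t := by
  obtain ⟨N, hN0, hN⟩ : ∃ N : ℕ, 0 < N ∧ ∀ i, hfl (β i) < N :=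
    ⟨Finset.univ.sup (fun i => hfl (β i)) + 1, Nat.succ_pos _, fun i =>
      Nat.lt_succ_of_le (Finset.le_sup (f := fun i => hfl (β i)) (Finset.mem_univ i))⟩
  obtain ⟨δ, hδ, hKδ⟩ := Metric.nhds_basis_closedBall.eventually_iff.1 hKκ
  obtain ⟨η, hbias, hη, hηδ⟩ := ((eventually_mul_sum_rpow_le_half hβ (2 ^ (N * d) * L) hc10).and
    (Ioc_mem_nhdsGT hδ)).exists
  refine ⟨κ ^ 2 * η ^ d / (2 ^ (N * d + 1) * N ^ (2 * d)), by positivity,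
    fun p hp hp0 hpH t n h hh => ?_⟩
  have hsmall := hbias (p t) h (hp0 t) fun i => ⟨(hh i).1.le, (hh i).2⟩
  have hvol : ∏ i, (η • h) i ≤
      (N : ℝ) ^ (2 * d) * volume.real (comparableBox p (2 ^ (N * d + 1)) t (η • h)) :=
    hpH.prod_le_pow_mul_volume_real_comparableBox (fun i => (hβ i).le) hN
      (fun i => mul_nonneg hη.le (hh i).1.le) (by rwa [abs_of_nonneg (hp0 t)])
  have hvar := mul_volume_real_comparableBox_le_sigmaSq hK hKM hκ.le
    (fun x hx => hKδ (mem_closedBall_zero_iff.2 (hx.trans hηδ))) hη.le hp hp0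
    (pow_pos two_pos (N * d + 1)) (fun i => (hh i).1) t n
  have hprod : 0 < ∏ i, h i := Finset.prod_pos fun i _ => (hh i).1
  calc κ ^ 2 * η ^ d / (2 ^ (N * d + 1) * N ^ (2 * d)) * p t / (n * ∏ i, h i)
      = (n : ℝ)⁻¹ * (((∏ i, h i)⁻¹ * κ) ^ 2 * (p t / 2 ^ (N * d + 1)) *
          ((∏ i, (η • h) i) / N ^ (2 * d))) := by
        simp only [Pi.smul_apply, smul_eq_mul, Finset.prod_mul_distrib, Finset.prod_const,
          Finset.card_univ, Fintype.card_fin]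
        field_simp
    _ ≤ sigmaSq d n K p h t := by
        refine le_trans ?_ hvar
        have hpt := hp0 t
        gcongr
        exact (div_le_iff₀' (by positivity)).2 hvol

/-- Lemma 5.1(ii), lower variance bound.
For any `β` with `0 < β_i < ∞`, `L > 0` and any `c₁₀ > 0` there is `c₁₁(β,L,c₁₀) > 0` such
that for every `p ∈ 𝒫_d(β,L)`, every `t`, every `n` and every bandwidth with
`0 < h_i ≤ c₁₀ p(t)^{1/β_i}`: `c₁₁ p(t)/(n ∏ h_i) ≤ n⁻¹((K_h)² ∗ p)(t)`. -/
theorem statement8 (d : ℕ) (hd : 1 ≤ d) (K : Vec d → ℝ) (hK : IsProductKernel d K)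
    (β : Vec d) (hβ : ∀ i, 0 < β i) (L : ℝ) (hL : 0 < L) (c10 : ℝ) (hc10 : 0 < c10) :
    ∃ c11 : ℝ, 0 < c11 ∧
      ∀ p : Vec d → ℝ, Pclass d β L p → ∀ t : Vec d, ∀ n : ℕ, ∀ h : Vec d,
        (∀ i, 0 < h i ∧ h i ≤ c10 * p t ^ (β i)⁻¹) →
        c11 * p t / (n * ∏ i, h i) ≤ sigmaSq d n K p h t := by
  obtain ⟨M, hKM⟩ := hK.exists_abs_le
  obtain ⟨c11, hc11, hbound⟩ := statement8_general hK.measurable hKM (half_pos hK.zero_pos)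
    (hK.continuousAt_zero.eventually_const_le (half_lt_self hK.zero_pos)) hβ L hc10.le
  exact ⟨c11, hc11, fun p hp => hbound p (.of_integral_ne_zero (hp.1.2.2 ▸ one_ne_zero))
    hp.1.2.1 hp.2⟩
end

section
/- (Lemma 5.2, ordering of truncated variances.) Let 0 < β_i ≤ 2 for i = 1,…,d, L > 0. There exists a constant c₁₂(β,L) > 0 such that for every p ∈ 𝒫_d(β,L), every t ∈ ℝ^d and all (nonrandom) multi-indices j = (j_1,…,j_d) and m = (m_1,…,m_d) with j ≥ j̄ componentwise: σ²_{t,trunc}(j ∧ m) ≤ c₁₂(β,L) max{ σ²_{t,trunc}(j), σ²_{t,trunc}(m) }. If additionally m ≥ j componentwise, then σ²_{t,trunc}(j) ≤ c₁₂(β,L) σ²_{t,trunc}(m). -/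
open MeasureTheory Real
open scoped ENNReal BigOperators

noncomputable section
/-- The constant `c₈(β,L) = min_i ( 2dL ∫ |x_i|^{β_i} K²(x) dλ^d(x) / ‖K‖₂² )^{-1/β_i}`. -/
def c8const (d : ℕ) (K : Vec d → ℝ) (β : Vec d) (L : ℝ) : ℝ :=
  ⨅ i : Fin d,
    (2 * d * L * (∫ x : Vec d, |x i| ^ (β i) * (K x) ^ 2) / K2sq d K) ^ (-(β i)⁻¹)

/-- The reference (optimal adaptive) bandwidth `h̄` of (5.2), as a function of `p(t)`:
`h̄_i = c₈(β,L) max{ (log n/n)^{(β̄/(β̄+1))(1/β_i)}, (p(t) log n/n)^{(β̄/(2β̄+1))(1/β_i)} }`. -/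
def hbar (d : ℕ) (K : Vec d → ℝ) (β : Vec d) (L : ℝ) (n : ℕ) (pt : ℝ) : Vec d :=
  fun i => c8const d K β L *
    max ((Real.log n / n) ^ ((betaBar β / (betaBar β + 1)) * (β i)⁻¹))
        ((pt * Real.log n / n) ^ ((betaBar β / (2 * betaBar β + 1)) * (β i)⁻¹))

/-- The dyadic approximation `j̄_i = ⌊log₂(1/h̄_i)⌋ + 1` of the reference bandwidth. -/
def jbar (d : ℕ) (K : Vec d → ℝ) (β : Vec d) (L : ℝ) (n : ℕ) (pt : ℝ) : Fin d → ℤ :=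
  fun i => ⌊Real.logb 2 (1 / hbar d K β L n pt i)⌋ + 1

/-- The bandwidth `(2^{-j_1}, …, 2^{-j_d})` associated with an integer multi-index. -/
def bwOfZ (d : ℕ) (j : Fin d → ℤ) : Vec d := fun i => (2 : ℝ) ^ (-(j i : ℝ))
end

/-!
The substitution `y = t - h x` gives `n ∏ h_i σ_t²(h) = Φ(h)` with `Φ(h) = ∫ K²(x) p(t - h x) dx`.
As `K²` is even in each coordinate, changing one entry of `h` changes `Φ` by an average of second
differences of `p`, which the Hölder condition controls. Let `M` be the bias level for which
`h̄_i = c₈ M^{1/β_i}`. The choice of `c₈` makes the total change of `Φ` at most `‖K‖₂² M` as long as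
all the entries that change stay below `h̄`.

It remains to absorb `‖K‖₂² M / (n ∏ h_i)` into the truncated variance at a bandwidth `h ≤ h̄`. The
two terms in the definition of `h̄` correspond to the two terms of the truncated variance. Either
`M ≤ p(t)`, and then `Φ(h) ≥ ‖K‖₂² (p(t) - M/2) ≥ ‖K‖₂² M / 2`. Or `M^{1 + 1/β̄} = log n / n`, and
then `∏ h_i ≤ c₈^d M^{1/β̄}` makes the truncation level at `h` large enough.
-/

section Kernel

/-- Square-integrable, compactly supported kernels that are even in each coordinate and not almost
everywhere zero, such as the product kernels of `IsProductKernel`. -/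
structure IsEvenKernel (d : ℕ) (K : Vec d → ℝ) : Prop where
  integrable_sq : Integrable fun x => K x ^ 2
  hasCompactSupport : HasCompactSupport K
  update_neg : ∀ x i, K (Function.update x i (-x i)) = K x
  not_ae_zero : ¬K =ᵐ[volume] 0

variable {d : ℕ} {K : Vec d → ℝ}

lemma IsProductKernel.integrable_sq (hK : IsProductKernel d K) :
    Integrable fun x => K x ^ 2 := by
  obtain ⟨Ki, hKi, hKi'⟩ := hK
  simp_rw [hKi, ← Finset.prod_pow]
  refine Integrable.fintype_prod (f := fun i y => Ki i y ^ 2) fun i => ?_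
  obtain ⟨-, -, hsupp, hcont, -, -⟩ := hKi' i
  refine ((hcont.pow 2).integrableOn_compact isCompact_Icc).integrable_of_forall_notMem_eq_zero
    fun y hy => ?_
  rw [Pi.pow_apply, hsupp y hy, zero_pow two_ne_zero]

lemma IsProductKernel.integral_eq_one (hK : IsProductKernel d K) : ∫ x, K x = 1 := by
  obtain ⟨Ki, hKi, hKi'⟩ := hK
  simp_rw [hKi, integral_fintype_prod_volume_eq_prod]
  exact Finset.prod_eq_one fun i _ => (hKi' i).2.2.2.2.1

lemma IsProductKernel.hasCompactSupport (hK : IsProductKernel d K) : HasCompactSupport K := by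
  obtain ⟨Ki, hKi, hKi'⟩ := hK
  refine HasCompactSupport.intro
    (isCompact_univ_pi fun _ => isCompact_Icc (a := (-1 : ℝ)) (b := 1)) fun x hx => ?_
  obtain ⟨i, hi⟩ : ∃ i, x i ∉ Set.Icc (-1 : ℝ) 1 := by
    simpa only [Set.mem_univ_pi, not_forall] using hx
  exact (hKi x).trans (Finset.prod_eq_zero (Finset.mem_univ i) ((hKi' i).2.2.1 _ hi))

lemma IsProductKernel.update_neg (hK : IsProductKernel d K) (x : Vec d) (i : Fin d) :
    K (Function.update x i (-x i)) = K x := by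
  obtain ⟨Ki, hKi, hKi'⟩ := hK
  rw [hKi, hKi]
  refine Finset.prod_congr rfl fun k _ => ?_
  rcases eq_or_ne k i with rfl | hki
  · rw [Function.update_self, (hKi' k).2.1]
  · rw [Function.update_of_ne hki]

lemma IsProductKernel.isEvenKernel (hK : IsProductKernel d K) : IsEvenKernel d K where
  integrable_sq := hK.integrable_sq
  hasCompactSupport := hK.hasCompactSupport
  update_neg := hK.update_neg
  not_ae_zero h := by
    simpa [hK.integral_eq_one] using integral_congr_ae h

namespace IsEvenKernel

lemma integrable_sq_mul (hK : IsEvenKernel d K) {g : Vec d → ℝ}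
    (hg : AEStronglyMeasurable g volume) {B : ℝ} (hB : ∀ x ∈ tsupport K, |g x| ≤ B) :
    Integrable fun x => K x ^ 2 * g x := by
  refine (hK.integrable_sq.mul_const B).mono' (hK.integrable_sq.aestronglyMeasurable.mul hg)
    (.of_forall fun x => ?_)
  rw [norm_mul, norm_pow, Real.norm_eq_abs, Real.norm_eq_abs, sq_abs]
  by_cases hx : x ∈ tsupport K
  · exact mul_le_mul_of_nonneg_left (hB x hx) (sq_nonneg _)
  · simp [image_eq_zero_of_notMem_tsupport hx]

lemma integrable_moment (hK : IsEvenKernel d K) (i : Fin d) {b : ℝ} (hb : 0 ≤ b) :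
    Integrable fun x : Vec d => |x i| ^ b * K x ^ 2 := by
  have hcont : Continuous fun x : Vec d => |x i| ^ b :=
    (continuous_apply i).abs.rpow_const fun _ => .inr hb
  obtain ⟨B, hB⟩ := hK.hasCompactSupport.isCompact.exists_bound_of_continuousOn hcont.continuousOn
  simpa only [mul_comm] using hK.integrable_sq_mul hcont.aestronglyMeasurable hB

lemma moment_pos (hK : IsEvenKernel d K) (i : Fin d) {b : ℝ} (hb : 0 ≤ b) :
    0 < ∫ x : Vec d, |x i| ^ b * K x ^ 2 := by
  have hnonneg : 0 ≤ fun x : Vec d => |x i| ^ b * K x ^ 2 := fun x => by positivity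
  refine (integral_nonneg hnonneg).lt_of_ne' fun hzero => hK.not_ae_zero ?_
  rw [integral_eq_zero_iff_of_nonneg hnonneg (hK.integrable_moment i hb)] at hzero
  have hcoord : ∀ᵐ x : Vec d, x i ≠ 0 :=
    compl_mem_ae_iff.2 (Measure.pi_hyperplane _ i 0)
  filter_upwards [hzero, hcoord] with x hx hxi
  exact pow_eq_zero_iff two_ne_zero |>.1 <|
    (mul_eq_zero.1 hx).resolve_left (rpow_pos_of_pos (abs_pos.2 hxi) b).ne'

lemma K2sq_pos (hK : IsEvenKernel d K) : 0 < K2sq d K := by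
  have hnonneg : 0 ≤ fun x => K x ^ 2 := fun x => sq_nonneg _
  refine (integral_nonneg hnonneg).lt_of_ne' fun hzero => hK.not_ae_zero ?_
  rw [integral_eq_zero_iff_of_nonneg hnonneg hK.integrable_sq] at hzero
  filter_upwards [hzero] with x hx using pow_eq_zero_iff two_ne_zero |>.1 hx

variable [NeZero d] {β : Vec d} {L : ℝ}

lemma c8const_pos (hK : IsEvenKernel d K) (hβ : ∀ i, 0 < β i) (hL : 0 < L) :
    0 < c8const d K β L := by
  obtain ⟨i, hi⟩ := exists_eq_ciInf_of_finite (f := fun i : Fin d =>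
    (2 * d * L * (∫ x : Vec d, |x i| ^ (β i) * (K x) ^ 2) / K2sq d K) ^ (-(β i)⁻¹))
  have hmoment := hK.moment_pos i (hβ i).le
  have hK2 := hK.K2sq_pos
  have hd : (0 : ℝ) < d := Nat.cast_pos.2 (NeZero.pos d)
  rw [c8const, ← hi]
  positivity

lemma mul_moment_mul_c8const_rpow_le (hK : IsEvenKernel d K) (hβ : ∀ i, 0 < β i) (hL : 0 < L)
    (i : Fin d) :
    L * (∫ x : Vec d, |x i| ^ β i * K x ^ 2) * c8const d K β L ^ β i ≤ K2sq d K / (2 * d) := by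
  have hmoment := hK.moment_pos i (hβ i).le
  have hK2 := hK.K2sq_pos
  have hd : (0 : ℝ) < d := Nat.cast_pos.2 (NeZero.pos d)
  set I := ∫ x : Vec d, |x i| ^ β i * K x ^ 2
  have hc8 : c8const d K β L ≤ (2 * d * L * I / K2sq d K) ^ (-(β i)⁻¹) :=
    ciInf_le (Set.finite_range _).bddBelow i
  calc L * I * c8const d K β L ^ β i
      ≤ L * I * ((2 * d * L * I / K2sq d K) ^ (-(β i)⁻¹)) ^ β i := by
        have := (hK.c8const_pos hβ hL).le
        have := (hβ i).le
        gcongr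
    _ = L * I * (2 * d * L * I / K2sq d K)⁻¹ := by
        rw [← rpow_mul (by positivity), neg_mul, inv_mul_cancel₀ (hβ i).ne', rpow_neg_one]
    _ = K2sq d K / (2 * d) := by field_simp

end IsEvenKernel

end Kernel

section HolderClass

/-- Nonnegative measurable functions satisfying the anisotropic Hölder condition; those of total
mass one form the class `𝒫_d(β, L)`. -/
structure IsHolderNonneg (d : ℕ) (β : Vec d) (L : ℝ) (p : Vec d → ℝ) : Prop where
  measurable : Measurable p
  nonneg : ∀ x, 0 ≤ p x
  holder : HolderAniso d β L p

variable {d : ℕ} {β : Vec d} {L : ℝ} {p : Vec d → ℝ}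

lemma Pclass.isHolderNonneg (hp : Pclass d β L p) : IsHolderNonneg d β L p :=
  ⟨hp.1.1, hp.1.2.1, hp.2⟩

lemma hfl_le_one {b : ℝ} (hb : b ≤ 2) : hfl b ≤ 1 :=
  Nat.sub_le_of_le_add (Nat.ceil_le.2 (by exact_mod_cast hb))

lemma taylorPoly_sub_add_taylorPoly_add {l : ℕ} (hl : l ≤ 1) (f : ℝ → ℝ) (y u : ℝ) :
    taylorPoly f l y (y - u) + taylorPoly f l y (y + u) = 2 * f y := by
  interval_cases l
  · simp [taylorPoly]; ring
  · simp [taylorPoly, Finset.sum_range_succ]; ring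

lemma HolderAniso.abs_add_sub_two_mul_le (hp : HolderAniso d β L p) {i : Fin d} (hβ : β i ≤ 2)
    (x : Vec d) (y u : ℝ) :
    |sliceFun p i x (y - u) + sliceFun p i x (y + u) - 2 * sliceFun p i x y| ≤
      2 * (L * |u| ^ β i) := by
  have hminus := (hp i).2 x (y - u) y
  have hplus := (hp i).2 x (y + u) y
  rw [sub_sub_cancel_left, abs_neg] at hminus
  rw [add_sub_cancel_left] at hplus
  rw [← taylorPoly_sub_add_taylorPoly_add (hfl_le_one hβ), add_sub_add_comm, two_mul]
  exact (abs_add_le _ _).trans (add_le_add hminus hplus)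

lemma HolderAniso.const_nonneg_s10 (hp : HolderAniso d β L p) (i : Fin d) : 0 ≤ L := by
  simpa using (abs_nonneg _).trans ((hp i).2 0 1 0)

namespace IsHolderNonneg

/-- `p` at the reflection of `x` through the slice point is nonnegative, so the second difference
bounds `p x` from above. -/
lemma le_two_mul_update_add (hp : IsHolderNonneg d β L p) {i : Fin d} (hβ : β i ≤ 2)
    (x : Vec d) (y : ℝ) :
    p x ≤ 2 * p (Function.update x i y) + 2 * (L * |x i - y| ^ β i) := by
  have hdiff := (abs_le.1 (hp.holder.abs_add_sub_two_mul_le hβ x y (x i - y))).2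
  have hreflect : 0 ≤ sliceFun p i x (y - (x i - y)) := hp.nonneg _
  rw [add_sub_cancel] at hdiff
  simp only [sliceFun, Function.update_eq_self] at hdiff hreflect
  linarith

lemma bddAbove_image (hp : IsHolderNonneg d β L p) (hβ : ∀ i, 0 ≤ β i) (hβ2 : ∀ i, β i ≤ 2)
    {s : Set (Vec d)} (hs : Bornology.IsBounded s) : BddAbove (p '' s) := by
  obtain ⟨r, hr⟩ := hs.exists_norm_le
  suffices H : ∀ T : Finset (Fin d), ∃ B, ∀ z : Vec d, (∀ i, |z i| ≤ r) → (∀ i ∉ T, z i = 0) →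
      p z ≤ B by
    obtain ⟨B, hB⟩ := H Finset.univ
    refine ⟨B, Set.forall_mem_image.2 fun z hz => hB z (fun i => ?_) (by simp)⟩
    exact (norm_le_pi_norm z i).trans (hr z hz)
  intro T
  induction T using Finset.induction_on with
  | empty => exact ⟨p 0, fun z _ hz => (congrArg p (funext fun i => hz i (by simp))).le⟩
  | insert i T _ ih =>
    obtain ⟨B, hB⟩ := ih
    refine ⟨2 * B + 2 * (L * r ^ β i), fun z hzr hzT => ?_⟩
    have hzero : p (Function.update z i 0) ≤ B := by
      refine hB _ (fun k => ?_) fun k hk => ?_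
      · rcases eq_or_ne k i with rfl | hki
        · simpa using (abs_nonneg _).trans (hzr k)
        · simpa [hki] using hzr k
      · rcases eq_or_ne k i with rfl | hki
        · simp
        · simpa [hki] using hzT k (by simp [hki, hk])
    have hL := hp.holder.const_nonneg_s10 i
    calc p z ≤ 2 * p (Function.update z i 0) + 2 * (L * |z i - 0| ^ β i) :=
          hp.le_two_mul_update_add (hβ2 i) z 0
      _ ≤ 2 * B + 2 * (L * r ^ β i) := by
          rw [sub_zero]
          gcongr
          · exact hβ i
          · exact hzr i

end IsHolderNonneg

end HolderClass

section ChangeOfVariables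

variable {ι E : Type*} [Fintype ι] [NormedAddCommGroup E] [NormedSpace ℝ E]

lemma integral_comp_pi_mul_left (h : ι → ℝ) (hh : ∀ i, h i ≠ 0) (f : (ι → ℝ) → E) :
    ∫ x, f (h * x) = |∏ i, h i|⁻¹ • ∫ x, f x := by
  classical
  have hprod : ∏ i, h i ≠ 0 := Finset.prod_ne_zero_iff.2 fun i _ => hh i
  have hmap : ENNReal.ofReal |∏ i, h i| • volume.map (h * ·) = (volume : Measure (ι → ℝ)) := by
    have hdiag := Real.smul_map_diagonal_volume_pi (D := h) (by rwa [Matrix.det_diagonal])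
    rw [Matrix.det_diagonal] at hdiag
    convert hdiag using 3
    ext x i
    simp [Matrix.mulVec_diagonal]
  have hemb : MeasurableEmbedding (h * · : (ι → ℝ) → ι → ℝ) :=
    (Homeomorph.piCongrRight fun i => Homeomorph.mulLeft₀ (h i) (hh i)).measurableEmbedding
  conv_rhs => rw [← hmap]
  rw [integral_smul_measure, hemb.integral_map, ENNReal.toReal_ofReal (abs_nonneg _),
    inv_smul_smul₀ (abs_ne_zero.2 hprod)]

lemma integral_comp_update_neg [DecidableEq ι] (i : ι) (f : (ι → ℝ) → E) :
    ∫ x, f (Function.update x i (-x i)) = ∫ x, f x := by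
  have hne : ∀ k, Function.update (1 : ι → ℝ) i (-1) k ≠ 0 := fun k => by
    rcases eq_or_ne k i with rfl | hki <;> simp [*]
  have hreflect : ∀ x : ι → ℝ,
      Function.update (1 : ι → ℝ) i (-1) * x = Function.update x i (-x i) := fun x => by
    ext k
    rcases eq_or_ne k i with rfl | hki <;> simp [*]
  simpa [hreflect, Finset.prod_update_of_mem] using
    integral_comp_pi_mul_left (Function.update 1 i (-1)) hne f

end ChangeOfVariables

section KernelSqAvg

/-- The average `∫ K²(x) p(t - h x) dx`, which up to the factor `1/(n ∏ h_i)` is `σ_t²(h)`; unlike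
`σ_t²(h)` it makes sense for bandwidths with zero entries. -/
noncomputable def kernelSqAvg {d : ℕ} (K p : Vec d → ℝ) (t h : Vec d) : ℝ :=
  ∫ x : Vec d, K x ^ 2 * p (t - h * x)

/-- The bound `L ∑_{i ∈ T} |h_i|^{β_i} ∫ |x_i|^{β_i} K²(x) dx` on the bias of `kernelSqAvg` in the
directions `T`, the analogue of `biasBound` for the kernel `K²`. -/
noncomputable def sqBiasBound {d : ℕ} (K : Vec d → ℝ) (β : Vec d) (L : ℝ) (T : Finset (Fin d))
    (h : Vec d) : ℝ :=
  ∑ i ∈ T, L * (∫ x : Vec d, |x i| ^ β i * K x ^ 2) * |h i| ^ β i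

variable {d : ℕ} {K p : Vec d → ℝ} {β : Vec d} {L : ℝ}

lemma kernelSqAvg_zero (t : Vec d) : kernelSqAvg K p t 0 = K2sq d K * p t := by
  simp [kernelSqAvg, K2sq, integral_mul_const]

lemma kernelSqAvg_nonneg (hp : ∀ x, 0 ≤ p x) (t h : Vec d) : 0 ≤ kernelSqAvg K p t h :=
  integral_nonneg fun _ => mul_nonneg (sq_nonneg _) (hp _)

lemma sigmaSq_eq_kernelSqAvg_div (n : ℕ) (t : Vec d) {h : Vec d} (hh : ∀ i, 0 < h i) :
    sigmaSq d n K p h t = kernelSqAvg K p t h / (n * ∏ i, h i) := by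
  have hprod : 0 < ∏ i, h i := Finset.prod_pos fun i _ => hh i
  have hscale : ∀ x : Vec d,
      scaledKernel d K h (fun i => t i - (t - h * x) i) = (∏ i, h i)⁻¹ * K x := fun x => by
    unfold scaledKernel
    congr 2 with i
    simp [(hh i).ne']
  have hvar : ∫ y, scaledKernel d K h (fun i => t i - y i) ^ 2 * p y =
      (∏ i, h i) * ∫ x : Vec d, ((∏ i, h i)⁻¹ * K x) ^ 2 * p (t - h * x) := by
    rw [← integral_sub_left_eq_self _ volume t]
    have hcomp := integral_comp_pi_mul_left h (fun i => (hh i).ne') fun y : Vec d =>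
      scaledKernel d K h (fun i => t i - (t - y) i) ^ 2 * p (t - y)
    simp only [hscale] at hcomp
    rw [hcomp, abs_of_pos hprod, smul_eq_mul, mul_inv_cancel_left₀ hprod.ne']
  rw [sigmaSq, hvar]
  simp only [mul_pow, mul_assoc, integral_const_mul, kernelSqAvg]
  field_simp

lemma kernelSqAvg_update_neg (hK : IsEvenKernel d K) (t h : Vec d) (i : Fin d) (s : ℝ) :
    kernelSqAvg K p t (Function.update h i (-s)) = kernelSqAvg K p t (Function.update h i s) := by
  rw [kernelSqAvg, ← integral_comp_update_neg i]
  refine integral_congr_ae (.of_forall fun x => ?_)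
  have hflip : Function.update h i (-s) * Function.update x i (-x i) =
      Function.update h i s * x := by
    ext k
    rcases eq_or_ne k i with rfl | hki <;> simp [*]
  simp only [hK.update_neg, hflip]

lemma integrable_sq_mul_comp (hK : IsEvenKernel d K) (hβ : ∀ i, 0 ≤ β i) (hβ2 : ∀ i, β i ≤ 2)
    (hp : IsHolderNonneg d β L p) (t h : Vec d) :
    Integrable fun x : Vec d => K x ^ 2 * p (t - h * x) := by
  have hcont : Continuous fun x : Vec d => t - h * x := by fun_prop
  obtain ⟨B, hB⟩ := hp.bddAbove_image hβ hβ2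
    (hK.hasCompactSupport.isCompact.image hcont).isBounded
  refine hK.integrable_sq_mul (hp.measurable.comp hcont.measurable).aestronglyMeasurable
    (B := B) fun x hx => ?_
  rw [abs_of_nonneg (hp.nonneg _)]
  exact hB (Set.mem_image_of_mem p (Set.mem_image_of_mem _ hx))

/-- Since `K²` is even, the deviation is half the integral of a second difference of `p`. -/
lemma abs_kernelSqAvg_update_sub_update_zero_le (hK : IsEvenKernel d K) (hβ : ∀ i, 0 ≤ β i)
    (hβ2 : ∀ i, β i ≤ 2) (hp : IsHolderNonneg d β L p) (t h : Vec d) (i : Fin d) (s : ℝ) :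
    |kernelSqAvg K p t (Function.update h i s) - kernelSqAvg K p t (Function.update h i 0)| ≤
      L * (∫ x : Vec d, |x i| ^ β i * K x ^ 2) * |s| ^ β i := by
  have hint := fun r => integrable_sq_mul_comp hK hβ hβ2 hp t (Function.update h i r)
  have hslice : ∀ (r : ℝ) (x : Vec d), p (t - Function.update h i r * x) =
      sliceFun p i (t - h * x) (t i - r * x i) := fun r x => by
    unfold sliceFun
    congr 1 with k
    rcases eq_or_ne k i with rfl | hki <;> simp [*]
  have hdouble : 2 * (kernelSqAvg K p t (Function.update h i s) -
        kernelSqAvg K p t (Function.update h i 0)) =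
      ∫ x : Vec d, (K x ^ 2 * p (t - Function.update h i s * x) +
        K x ^ 2 * p (t - Function.update h i (-s) * x) -
        2 * (K x ^ 2 * p (t - Function.update h i 0 * x))) := by
    rw [integral_sub (f := fun x => _ + _) ((hint s).add (hint (-s))) ((hint 0).const_mul 2),
      integral_add (hint s) (hint (-s)), integral_const_mul]
    have hneg := kernelSqAvg_update_neg (p := p) hK t h i s
    unfold kernelSqAvg at hneg ⊢
    linarith
  have hbound : |2 * (kernelSqAvg K p t (Function.update h i s) -
        kernelSqAvg K p t (Function.update h i 0))| ≤
      ∫ x : Vec d, 2 * (L * |s| ^ β i) * (|x i| ^ β i * K x ^ 2) := by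
    rw [hdouble, ← Real.norm_eq_abs]
    refine norm_integral_le_of_norm_le ((hK.integrable_moment i (hβ i)).const_mul _)
      (.of_forall fun x => ?_)
    have hdiff := hp.holder.abs_add_sub_two_mul_le (hβ2 i) (t - h * x) (t i) (s * x i)
    rw [abs_mul, mul_rpow (abs_nonneg _) (abs_nonneg _)] at hdiff
    simp only [hslice, neg_mul, sub_neg_eq_add, zero_mul, sub_zero]
    rw [mul_left_comm 2, ← mul_add, ← mul_sub, norm_mul, Real.norm_of_nonneg (sq_nonneg _),
      Real.norm_eq_abs]
    exact (mul_le_mul_of_nonneg_left hdiff (sq_nonneg _)).trans_eq (by ring)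
  rw [abs_mul, abs_two, integral_const_mul] at hbound
  linarith

lemma abs_kernelSqAvg_sub_le (hK : IsEvenKernel d K) (hβ : ∀ i, 0 ≤ β i) (hβ2 : ∀ i, β i ≤ 2)
    (hp : IsHolderNonneg d β L p) (t h g : Vec d) (T : Finset (Fin d)) :
    |kernelSqAvg K p t (T.piecewise h g) - kernelSqAvg K p t g| ≤
      sqBiasBound K β L T h + sqBiasBound K β L T g := by
  induction T using Finset.induction_on with
  | empty => simp [sqBiasBound]
  | insert i T hi ih =>
    have hstep := fun s =>
      abs_kernelSqAvg_update_sub_update_zero_le hK hβ hβ2 hp t (T.piecewise h g) i s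
    have hg : Function.update (T.piecewise h g) i (g i) = T.piecewise h g := by simp [hi]
    have hstep_g := hg ▸ hstep (g i)
    rw [abs_sub_comm] at hstep_g
    have htri := (abs_sub_le _ _ _).trans (add_le_add (hstep (h i)) hstep_g)
    rw [Finset.piecewise_insert]
    simp only [sqBiasBound, Finset.sum_insert hi] at ih ⊢
    linarith [abs_sub_le (kernelSqAvg K p t (Function.update (T.piecewise h g) i (h i)))
      (kernelSqAvg K p t (T.piecewise h g)) (kernelSqAvg K p t g)]

variable [NeZero d]

lemma sqBiasBound_le (hK : IsEvenKernel d K) (hβ : ∀ i, 0 < β i) (hL : 0 < L) {M : ℝ} (hM : 0 ≤ M)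
    {T : Finset (Fin d)} {h : Vec d} (hh : ∀ i, 0 ≤ h i)
    (hhM : ∀ i ∈ T, h i ≤ c8const d K β L * M ^ (β i)⁻¹) :
    sqBiasBound K β L T h ≤ K2sq d K * M / 2 := by
  have hc8 := hK.c8const_pos hβ hL
  have hK2 := hK.K2sq_pos
  have hd : (0 : ℝ) < d := Nat.cast_pos.2 (NeZero.pos d)
  calc sqBiasBound K β L T h
      ≤ ∑ _i ∈ T, K2sq d K / (2 * d) * M := by
        refine Finset.sum_le_sum fun i hi => ?_
        have hmoment := hK.moment_pos i (hβ i).le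
        have hpow : |h i| ^ β i ≤ c8const d K β L ^ β i * M := by
          rw [abs_of_nonneg (hh i)]
          refine (rpow_le_rpow (hh i) (hhM i hi) (hβ i).le).trans_eq ?_
          rw [mul_rpow hc8.le (by positivity), rpow_inv_rpow hM (hβ i).ne']
        refine (mul_le_mul_of_nonneg_left hpow (by positivity)).trans ?_
        rw [← mul_assoc]
        exact mul_le_mul_of_nonneg_right (hK.mul_moment_mul_c8const_rpow_le hβ hL i) hM
    _ ≤ ∑ _i : Fin d, K2sq d K / (2 * d) * M :=
        Finset.sum_le_sum_of_subset_of_nonneg T.subset_univ fun _ _ _ => by positivity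
    _ = K2sq d K * M / 2 := by
        simp only [Finset.sum_const, Finset.card_univ, Fintype.card_fin, nsmul_eq_mul]
        field_simp

lemma kernelSqAvg_le_add (hK : IsEvenKernel d K) (hβ : ∀ i, 0 < β i) (hβ2 : ∀ i, β i ≤ 2)
    (hL : 0 < L) (hp : IsHolderNonneg d β L p) (t : Vec d) {M : ℝ} (hM : 0 ≤ M) {f g : Vec d}
    (hf : ∀ i, 0 ≤ f i) (hg : ∀ i, 0 ≤ g i)
    (hfM : ∀ i, f i ≠ g i → f i ≤ c8const d K β L * M ^ (β i)⁻¹)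
    (hgM : ∀ i, f i ≠ g i → g i ≤ c8const d K β L * M ^ (β i)⁻¹) :
    kernelSqAvg K p t f ≤ kernelSqAvg K p t g + K2sq d K * M := by
  set T : Finset (Fin d) := {i | f i ≠ g i} with hT
  have hfg : T.piecewise f g = f := by
    ext i
    by_cases hi : f i = g i <;> simp [hT, Finset.piecewise, hi]
  have hdiff := abs_kernelSqAvg_sub_le hK (fun i => (hβ i).le) hβ2 hp t f g T
  rw [hfg] at hdiff
  have hbf := sqBiasBound_le hK hβ hL hM hf fun i (hi : i ∈ T) => hfM i (by simpa [hT] using hi)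
  have hbg := sqBiasBound_le hK hβ hL hM hg fun i (hi : i ∈ T) => hgM i (by simpa [hT] using hi)
  linarith [le_of_abs_le hdiff]

lemma K2sq_mul_sub_le_kernelSqAvg (hK : IsEvenKernel d K) (hβ : ∀ i, 0 < β i)
    (hβ2 : ∀ i, β i ≤ 2) (hL : 0 < L) (hp : IsHolderNonneg d β L p) (t : Vec d) {M : ℝ}
    (hM : 0 ≤ M) {h : Vec d} (hh : ∀ i, 0 ≤ h i)
    (hhM : ∀ i, h i ≤ c8const d K β L * M ^ (β i)⁻¹) :
    K2sq d K * (p t - M / 2) ≤ kernelSqAvg K p t h := by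
  have hdiff := abs_kernelSqAvg_sub_le hK (fun i => (hβ i).le) hβ2 hp t h 0 Finset.univ
  have hzero : sqBiasBound K β L Finset.univ 0 = 0 := by
    simp [sqBiasBound, zero_rpow (hβ _).ne']
  rw [Finset.piecewise_univ, kernelSqAvg_zero, hzero, add_zero] at hdiff
  have hbias := sqBiasBound_le hK hβ hL hM hh fun i (_ : i ∈ Finset.univ) => hhM i
  linarith [neg_le_of_abs_le hdiff]

end KernelSqAvg

section ReferenceBandwidth

/-- The bias level `M` at which the reference bandwidth is `h̄_i = c₈ M^{1/β_i}`, with `b = β̄`,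
`q = log n / n` and `P = p(t)`. -/
noncomputable def biasLevel (b q P : ℝ) : ℝ :=
  max (q ^ (b / (b + 1))) ((P * q) ^ (b / (2 * b + 1)))

lemma biasLevel_pos {q : ℝ} (hq : 0 < q) (b P : ℝ) : 0 < biasLevel b q P :=
  (rpow_pos_of_pos hq _).trans_le (le_max_left _ _)

lemma biasLevel_le_or_rpow_eq {b q P : ℝ} (hb : 0 < b) (hq : 0 < q) (hP : 0 ≤ P) :
    biasLevel b q P ≤ P ∨ biasLevel b q P ^ (1 + b⁻¹) = q := by
  have hPq : 0 ≤ P * q := by positivity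
  have hu_pos : 0 < q ^ (b / (b + 1)) := rpow_pos_of_pos hq _
  have hu : (q ^ (b / (b + 1))) ^ (1 + b⁻¹) = q := by
    rw [← rpow_mul hq.le, show b / (b + 1) * (1 + b⁻¹) = 1 by field_simp, rpow_one]
  have hv : ((P * q) ^ (b / (2 * b + 1))) ^ (1 + (1 + b⁻¹)) = P * q := by
    rw [← rpow_mul hPq, show b / (2 * b + 1) * (1 + (1 + b⁻¹)) = 1 by field_simp; ring, rpow_one]
  unfold biasLevel
  set u := q ^ (b / (b + 1))
  set v := (P * q) ^ (b / (2 * b + 1))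
  rcases le_or_gt v u with hvu | huv
  · right
    rwa [max_eq_left hvu]
  · left
    have hv_pos : 0 < v := hu_pos.trans huv
    have hq_le : q ≤ v ^ (1 + b⁻¹) := by
      rw [← hu]
      gcongr
    rw [max_eq_right huv.le]
    refine le_of_mul_le_mul_right ?_ (rpow_pos_of_pos hv_pos (1 + b⁻¹))
    calc v * v ^ (1 + b⁻¹) = P * q := by
          rw [← rpow_one_add' hv_pos.le (by positivity), hv]
      _ ≤ P * v ^ (1 + b⁻¹) := by gcongr

variable {d : ℕ} {K : Vec d → ℝ} {β : Vec d} {L : ℝ}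

lemma hbar_eq (K : Vec d → ℝ) (L : ℝ) (n : ℕ) {P : ℝ} (hP : 0 ≤ P) {i : Fin d} (hβ : 0 ≤ β i) :
    hbar d K β L n P i =
      c8const d K β L * biasLevel (betaBar β) (log n / n) P ^ (β i)⁻¹ := by
  have hq : 0 ≤ log n / n := div_nonneg (log_natCast_nonneg n) n.cast_nonneg
  have hPq : 0 ≤ P * (log n / n) := mul_nonneg hP hq
  rw [hbar, biasLevel, rpow_mul hq, mul_div_assoc, rpow_mul hPq,
    (monotoneOn_rpow_Ici_of_exponent_nonneg (inv_nonneg.2 hβ)).map_max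
      (rpow_nonneg hq _) (rpow_nonneg hPq _)]

lemma betaBar_pos [NeZero d] (hβ : ∀ i, 0 < β i) : 0 < betaBar β :=
  inv_pos.2 (Finset.sum_pos (fun i _ => inv_pos.2 (hβ i)) Finset.univ_nonempty)

lemma log_div_self_pos {n : ℕ} (hn : 2 ≤ n) : 0 < log n / n :=
  div_pos (log_pos (by exact_mod_cast hn)) (by positivity)

lemma hbar_pos [NeZero d] (hK : IsEvenKernel d K) (hβ : ∀ i, 0 < β i) (hL : 0 < L) {n : ℕ}
    (hn : 2 ≤ n) {P : ℝ} (hP : 0 ≤ P) (i : Fin d) : 0 < hbar d K β L n P i := by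
  rw [hbar_eq K L n hP (hβ i).le]
  exact mul_pos (hK.c8const_pos hβ hL)
    (rpow_pos_of_pos (biasLevel_pos (log_div_self_pos hn) _ _) _)

lemma bwOf_pos (j : Fin d → ℕ) (i : Fin d) : 0 < bwOf d j i :=
  rpow_pos_of_pos two_pos _

lemma bwOf_antitone : Antitone (bwOf d) := fun _ _ hjm i =>
  rpow_le_rpow_of_exponent_le one_le_two (neg_le_neg (Nat.cast_le.2 (hjm i)))

lemma bwOf_inf (j m : Fin d → ℕ) : bwOf d (j ⊓ m) = bwOf d j ⊔ bwOf d m := by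
  have hcoord : Antitone fun k : ℕ => (2 : ℝ) ^ (-(k : ℝ)) := fun _ _ hkl =>
    rpow_le_rpow_of_exponent_le one_le_two (neg_le_neg (Nat.cast_le.2 hkl))
  exact funext fun i => hcoord.map_min

lemma bwOf_le_hbar [NeZero d] (hK : IsEvenKernel d K) (hβ : ∀ i, 0 < β i) (hL : 0 < L) {n : ℕ}
    (hn : 2 ≤ n) {P : ℝ} (hP : 0 ≤ P) {j : Fin d → ℕ}
    (hj : ∀ i, jbar d K β L n P i ≤ (j i : ℤ)) : bwOf d j ≤ hbar d K β L n P := fun i => by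
  have hlog : logb 2 (1 / hbar d K β L n P i) < j i :=
    (Int.lt_floor_add_one _).trans_le (by exact_mod_cast hj i)
  rw [one_div, logb_inv] at hlog
  exact (le_logb_iff_rpow_le one_lt_two (hbar_pos hK hβ hL hn hP i)).1 (by linarith)

end ReferenceBandwidth

section Ordering

variable {d n : ℕ} {K p : Vec d → ℝ} {β : Vec d} {L : ℝ} {t : Vec d}

lemma truncLevel_nonneg (h : Vec d) : 0 ≤ truncLevel d n h := by
  unfold truncLevel
  positivity

lemma sigmaSq_nonneg (hp : ∀ x, 0 ≤ p x) (h : Vec d) : 0 ≤ sigmaSq d n K p h t :=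
  mul_nonneg (by positivity) (integral_nonneg fun _ => mul_nonneg (sq_nonneg _) (hp _))

lemma truncLevel_anti {h g : Vec d} (hh : ∀ i, 0 < h i) (hhg : h ≤ g) :
    truncLevel d n g ≤ truncLevel d n h := by
  have hprod : 0 < ∏ i, h i := Finset.prod_pos fun i _ => hh i
  have hprod_le : ∏ i, h i ≤ ∏ i, g i := Finset.prod_le_prod (fun i _ => (hh i).le) fun i _ => hhg i
  simp only [truncLevel, div_mul_eq_div_div]
  gcongr

lemma biasLevel_div_le_truncLevel (K : Vec d → ℝ) (hn : 2 ≤ n) {M : ℝ} (hM : 0 < M)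
    (hMn : M ^ (1 + (betaBar β)⁻¹) = log n / n) {h : Vec d} (hh : ∀ i, 0 < h i)
    (hhM : ∀ i, h i ≤ c8const d K β L * M ^ (β i)⁻¹) :
    K2sq d K * M / (n * ∏ i, h i) ≤
      K2sq d K * c8const d K β L ^ d / log n * truncLevel d n h := by
  have hprod : 0 < ∏ i, h i := Finset.prod_pos fun i _ => hh i
  have : (0 : ℝ) < n := by positivity
  have hlog : 0 < log n := log_pos (by exact_mod_cast hn)
  have hK2 : 0 ≤ K2sq d K := integral_nonneg fun _ => sq_nonneg _
  have hprod_le : M * ∏ i, h i ≤ c8const d K β L ^ d * (log n / n) := by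
    calc M * ∏ i, h i ≤ M * ∏ i, c8const d K β L * M ^ (β i)⁻¹ := by
          gcongr with i
          · exact fun i _ => (hh i).le
          · exact hhM i
      _ = c8const d K β L ^ d * (log n / n) := by
          rw [Finset.prod_mul_distrib, ← rpow_sum_of_pos hM, ← hMn, rpow_add hM, rpow_one,
            betaBar, inv_inv, Finset.prod_const, Finset.card_univ, Fintype.card_fin,
            mul_left_comm]
  calc K2sq d K * M / (n * ∏ i, h i)
      = K2sq d K * (M * ∏ i, h i) / (n * (∏ i, h i) ^ 2) := by field_simp
    _ ≤ K2sq d K * (c8const d K β L ^ d * (log n / n)) / (n * (∏ i, h i) ^ 2) := by gcongr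
    _ = K2sq d K * c8const d K β L ^ d / log n * truncLevel d n h := by
        unfold truncLevel
        field_simp

/-- The factor by which the truncated variance below the reference bandwidth dominates
`‖K‖₂² M / (n ∏ h_i)`, where `M` is the `biasLevel`; see `biasLevel_div_le`. -/
noncomputable def biasLevelConst (d : ℕ) (K : Vec d → ℝ) (β : Vec d) (L : ℝ) : ℝ :=
  2 + K2sq d K * c8const d K β L ^ d / log 2

variable [NeZero d]

lemma biasLevelConst_pos (hK : IsEvenKernel d K) (hβ : ∀ i, 0 < β i) (hL : 0 < L) :
    0 < biasLevelConst d K β L := by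
  have hK2 := hK.K2sq_pos
  have hc8 := hK.c8const_pos hβ hL
  unfold biasLevelConst
  positivity

lemma biasLevel_div_le_two_mul_sigmaSq (hK : IsEvenKernel d K) (hβ : ∀ i, 0 < β i)
    (hβ2 : ∀ i, β i ≤ 2) (hL : 0 < L) (hp : IsHolderNonneg d β L p) {M : ℝ} (hM : 0 ≤ M)
    (hMp : M ≤ p t) {h : Vec d} (hh : ∀ i, 0 < h i)
    (hhM : ∀ i, h i ≤ c8const d K β L * M ^ (β i)⁻¹) :
    K2sq d K * M / (n * ∏ i, h i) ≤ 2 * sigmaSq d n K p h t := by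
  have hprod : 0 < ∏ i, h i := Finset.prod_pos fun i _ => hh i
  have havg := K2sq_mul_sub_le_kernelSqAvg hK hβ hβ2 hL hp t hM (fun i => (hh i).le) hhM
  have hmul : K2sq d K * M ≤ K2sq d K * p t := mul_le_mul_of_nonneg_left hMp hK.K2sq_pos.le
  rw [sigmaSq_eq_kernelSqAvg_div n t hh, ← mul_div_assoc]
  refine div_le_div_of_nonneg_right ?_ (by positivity)
  linarith

lemma biasLevel_div_le (hK : IsEvenKernel d K) (hβ : ∀ i, 0 < β i) (hβ2 : ∀ i, β i ≤ 2)
    (hL : 0 < L) (hp : IsHolderNonneg d β L p) (hn : 2 ≤ n) {h : Vec d} (hh : ∀ i, 0 < h i)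
    (hh_le : h ≤ hbar d K β L n (p t)) :
    K2sq d K * biasLevel (betaBar β) (log n / n) (p t) / (n * ∏ i, h i) ≤
      biasLevelConst d K β L * sigmaSqTrunc d n K p h t := by
  have hq := log_div_self_pos hn
  have hM := biasLevel_pos hq (betaBar β) (p t)
  have hhM : ∀ i, h i ≤
      c8const d K β L * biasLevel (betaBar β) (log n / n) (p t) ^ (β i)⁻¹ := fun i =>
    (hh_le i).trans_eq (hbar_eq K L n (hp.nonneg t) (hβ i).le)
  have htrunc := truncLevel_nonneg (n := n) h
  have hσ : 0 ≤ sigmaSqTrunc d n K p h t := htrunc.trans (le_max_left _ _)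
  have hlogn : log 2 ≤ log n := log_le_log two_pos (by exact_mod_cast hn)
  have hK2 := hK.K2sq_pos
  have hc8 := hK.c8const_pos hβ hL
  have hconst : 0 ≤ K2sq d K * c8const d K β L ^ d / log 2 := by positivity
  rcases biasLevel_le_or_rpow_eq (betaBar_pos hβ) hq (hp.nonneg t) with hMp | hMn
  · refine (biasLevel_div_le_two_mul_sigmaSq hK hβ hβ2 hL hp hM.le hMp hh hhM).trans ?_
    exact mul_le_mul (le_add_of_nonneg_right hconst) (le_max_right _ _)
      (sigmaSq_nonneg hp.nonneg h) (biasLevelConst_pos hK hβ hL).le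
  · calc _ ≤ K2sq d K * c8const d K β L ^ d / log n * truncLevel d n h :=
          biasLevel_div_le_truncLevel K hn hM hMn hh hhM
      _ ≤ K2sq d K * c8const d K β L ^ d / log 2 * sigmaSqTrunc d n K p h t := by
          refine mul_le_mul ?_ (le_max_left _ _) htrunc hconst
          gcongr
      _ ≤ biasLevelConst d K β L * sigmaSqTrunc d n K p h t :=
          mul_le_mul_of_nonneg_right (le_add_of_nonneg_left zero_le_two) hσ

lemma sigmaSq_le_add (hK : IsEvenKernel d K) (hβ : ∀ i, 0 < β i) (hβ2 : ∀ i, β i ≤ 2)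
    (hL : 0 < L) (hp : IsHolderNonneg d β L p) {M : ℝ} (hM : 0 ≤ M) {f g k : Vec d}
    (hg : ∀ i, 0 < g i) (hk : ∀ i, 0 < k i) (hgf : g ≤ f) (hkf : k ≤ f)
    (hfM : ∀ i, f i ≠ g i → f i ≤ c8const d K β L * M ^ (β i)⁻¹) :
    sigmaSq d n K p f t ≤ sigmaSq d n K p g t + K2sq d K * M / (n * ∏ i, k i) := by
  have hf : ∀ i, 0 < f i := fun i => (hg i).trans_le (hgf i)
  have hg_prod : 0 < ∏ i, g i := Finset.prod_pos fun i _ => hg i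
  have hk_prod : 0 < ∏ i, k i := Finset.prod_pos fun i _ => hk i
  have hgf_prod : ∏ i, g i ≤ ∏ i, f i :=
    Finset.prod_le_prod (fun i _ => (hg i).le) fun i _ => hgf i
  have hkf_prod : ∏ i, k i ≤ ∏ i, f i :=
    Finset.prod_le_prod (fun i _ => (hk i).le) fun i _ => hkf i
  have hf_prod : 0 < ∏ i, f i := hg_prod.trans_le hgf_prod
  have havg := kernelSqAvg_le_add hK hβ hβ2 hL hp t hM (fun i => (hf i).le) (fun i => (hg i).le)
    hfM fun i hi => (hgf i).trans (hfM i hi)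
  have havg_nonneg := kernelSqAvg_nonneg (K := K) hp.nonneg t g
  have hK2 := hK.K2sq_pos
  rw [sigmaSq_eq_kernelSqAvg_div n t hf, sigmaSq_eq_kernelSqAvg_div n t hg]
  simp only [div_mul_eq_div_div]
  calc kernelSqAvg K p t f / n / ∏ i, f i
      ≤ (kernelSqAvg K p t g + K2sq d K * M) / n / ∏ i, f i := by gcongr
    _ = kernelSqAvg K p t g / n / ∏ i, f i + K2sq d K * M / n / ∏ i, f i := by ring
    _ ≤ kernelSqAvg K p t g / n / ∏ i, g i + K2sq d K * M / n / ∏ i, k i := by gcongr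

lemma sigmaSqTrunc_le_add (hK : IsEvenKernel d K) (hβ : ∀ i, 0 < β i) (hβ2 : ∀ i, β i ≤ 2)
    (hL : 0 < L) (hp : IsHolderNonneg d β L p) (hn : 2 ≤ n) {f g k : Vec d}
    (hg : ∀ i, 0 < g i) (hk : ∀ i, 0 < k i) (hgf : g ≤ f) (hkf : k ≤ f)
    (hk_le : k ≤ hbar d K β L n (p t)) (hf_le : ∀ i, f i ≠ g i → f i ≤ hbar d K β L n (p t) i) :
    sigmaSqTrunc d n K p f t ≤
      sigmaSqTrunc d n K p g t + biasLevelConst d K β L * sigmaSqTrunc d n K p k t := by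
  have hlevel := biasLevel_div_le hK hβ hβ2 hL hp hn hk hk_le
  have hM := biasLevel_pos (log_div_self_pos hn) (betaBar β) (p t)
  have hK2 := hK.K2sq_pos
  have hk_prod : 0 < ∏ i, k i := Finset.prod_pos fun i _ => hk i
  refine max_le ?_ ?_
  · exact (truncLevel_anti hg hgf).trans <| (le_max_left _ _).trans <|
      le_add_of_nonneg_right (le_trans (by positivity) hlevel)
  · refine (sigmaSq_le_add hK hβ hβ2 hL hp hM.le hg hk hgf hkf fun i hi => ?_).trans
      (add_le_add (le_max_right _ _) hlevel)
    exact (hf_le i hi).trans_eq (hbar_eq K L n (hp.nonneg t) (hβ i).le)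

end Ordering

theorem statement10_general (d : ℕ) [NeZero d] {K : Vec d → ℝ} (hK : IsEvenKernel d K)
    {β : Vec d} (hβ : ∀ i, 0 < β i) (hβ2 : ∀ i, β i ≤ 2) {L : ℝ} (hL : 0 < L) :
    ∃ c12 : ℝ, 0 < c12 ∧
      ∀ p : Vec d → ℝ, IsHolderNonneg d β L p → ∀ t : Vec d, ∀ n : ℕ, 2 ≤ n →
        ∀ h g : Vec d, (∀ i, 0 < h i) → (∀ i, 0 < g i) → h ≤ hbar d K β L n (p t) →
          (sigmaSqTrunc d n K p (h ⊔ g) t ≤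
            c12 * max (sigmaSqTrunc d n K p h t) (sigmaSqTrunc d n K p g t)) ∧
          (g ≤ h → sigmaSqTrunc d n K p h t ≤ c12 * sigmaSqTrunc d n K p g t) := by
  have hC := biasLevelConst_pos hK hβ hL
  refine ⟨1 + biasLevelConst d K β L, by positivity,
    fun p hp t n hn h g hh hg hh_le => ⟨?_, fun hgh => ?_⟩⟩
  · refine (sigmaSqTrunc_le_add hK hβ hβ2 hL hp hn hg hh le_sup_right le_sup_left hh_le
      fun i hi => ?_).trans ?_
    · have hsup : (h ⊔ g) i = h i :=
        sup_of_le_left (le_of_not_ge fun hhg => hi (sup_of_le_right hhg))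
      exact hsup.trans_le (hh_le i)
    · rw [one_add_mul]
      gcongr
      · exact le_max_right _ _
      · exact le_max_left _ _
  · rw [one_add_mul]
    exact sigmaSqTrunc_le_add hK hβ hβ2 hL hp hn hg hg hgh hgh (hgh.trans hh_le)
      fun i _ => hh_le i

/-- Lemma 5.2, ordering of truncated variances.
There is `c₁₂(β,L) > 0` such that for every `p ∈ 𝒫_d(β,L)` (`0 < β_i ≤ 2`), every `t` and
all (nonrandom) multi-indices `j, m` with `j ≥ j̄` componentwise:
`σ²_{t,trunc}(j ∧ m) ≤ c₁₂ max{σ²_{t,trunc}(j), σ²_{t,trunc}(m)}`, and if moreover `m ≥ j`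
componentwise then `σ²_{t,trunc}(j) ≤ c₁₂ σ²_{t,trunc}(m)`. -/
theorem statement10 (d : ℕ) (hd : 1 ≤ d) (K : Vec d → ℝ) (hK : IsProductKernel d K)
    (β : Vec d) (hβ : ∀ i, 0 < β i ∧ β i ≤ 2) (L : ℝ) (hL : 0 < L) :
    ∃ c12 : ℝ, 0 < c12 ∧
      ∀ p : Vec d → ℝ, Pclass d β L p → ∀ t : Vec d, ∀ n : ℕ, 2 ≤ n →
        ∀ j m : Fin d → ℕ, (∀ i, jbar d K β L n (p t) i ≤ (j i : ℤ)) →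
          (sigmaSqTrunc d n K p (bwOf d (fun i => min (j i) (m i))) t ≤
            c12 * max (sigmaSqTrunc d n K p (bwOf d j) t)
              (sigmaSqTrunc d n K p (bwOf d m) t)) ∧
          ((∀ i, j i ≤ m i) →
            sigmaSqTrunc d n K p (bwOf d j) t ≤ c12 * sigmaSqTrunc d n K p (bwOf d m) t) := by
  have : NeZero d := ⟨by omega⟩
  have hβ_pos := fun i => (hβ i).1
  obtain ⟨c12, hc12, H⟩ := statement10_general d hK.isEvenKernel hβ_pos (fun i => (hβ i).2) hL
  refine ⟨c12, hc12, fun p hp t n hn j m hj => ?_⟩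
  have hj_le := bwOf_le_hbar hK.isEvenKernel hβ_pos hL hn (hp.isHolderNonneg.nonneg t) hj
  obtain ⟨hsup, hle⟩ := H p hp.isHolderNonneg t n hn _ _ (bwOf_pos j) (bwOf_pos m) hj_le
  exact ⟨bwOf_inf j m ▸ hsup, fun hjm => hle (bwOf_antitone hjm)⟩
end
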